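/- arXiv:2404.05513 — 3 statements merged into one kernel-verified Lean document; each statement's English description precedes it below -/
import Mathlib

section
/- Let Γ be a group acting by graph automorphisms on a locally finite tree X (every vertex has finitely many neighbours), and suppose there is a vertex x₀ ∈ X whose stabiliser {g ∈ Γ : g·x₀ = x₀} is finite. Then Γ is weakly amenable with Cowling–Haagerup constant Λ(Γ) = 1, i.e. Γ is weakly amenable with constant at most C for every C > 1. -/
/-!
The multiplier is `φ g = f (d (g • x₀, x₀))` with `f n = r ^ n` truncated to `n < N + 2`, for `r < 1`
close to `1` and `N` large. Local finiteness and the finite stabiliser make its support finite.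

The multiplier norm is estimated on the whole tree. Choose a root and prolong the tree beyond it
by an infinite ray, so that every vertex `x` has an infinite sequence of ancestors `q x 0 = x, q x 1, …`
(`exists_rays`). Two such sequences merge: if they meet first at `q x m = q y k`, then
`m + k = d (x, y)` and the coincidences `q x i = q y j` are exactly those at `(m + l, k + l)`. Hence, by
telescoping (`sum_hankel`), a finitely supported `f` satisfies
`f (d (x, y)) = ∑ i j, (f (i + j) - f (i + j + 2)) * [q x i = q y j]`.
Each matrix of coefficients written as a sum of rank-one matrices thus gives a factorization of the
kernel through a Hilbert space (`exists_factorization`). For `f n = r ^ n` the coefficient matrix would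
be `(1 - r ^ 2) * r ^ i * r ^ j`, of rank one and norm one. The truncation changes only the entries with
`N ≤ i + j`, by at most `r ^ N` each, so the norm is at most `1 + (N + 2) ^ 2 * r ^ N`
(`exists_truncated`), which tends to `1` as `N → ∞`.

As a locally finite connected graph is countable, the Hilbert space can be taken to be `ℓ²(ℕ)`,
whatever the universes of the group and the tree.
-/

open scoped InnerProductSpace

noncomputable section

/-- A discrete group `Γ` is weakly amenable with constant at most `C` if for every finite
subset `F` and every `ε > 0` there is a finitely supported `φ : Γ → ℂ` with
`|φ s − 1| ≤ ε` on `F`, which is a Herz–Schur multiplier of norm at most `C`, i.e.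
`φ (s⁻¹ t) = ⟪ξ t, η s⟫` for bounded Hilbert-space-valued maps `ξ, η` whose sup-norms
have product at most `C`. -/
def WeaklyAmenableWithConst (Γ : Type*) [Group Γ] (C : ℝ) : Prop :=
  ∀ (F : Finset Γ) (ε : ℝ), 0 < ε →
    ∃ φ : Γ → ℂ, (Function.support φ).Finite ∧ (∀ s ∈ F, ‖φ s - 1‖ ≤ ε) ∧
      ∃ (H : Type) (_ : NormedAddCommGroup H) (_ : InnerProductSpace ℂ H)
        (_ : CompleteSpace H) (ξ η : Γ → H) (A B : ℝ),
        0 ≤ A ∧ 0 ≤ B ∧ (∀ t, ‖ξ t‖ ≤ A) ∧ (∀ s, ‖η s‖ ≤ B) ∧ A * B ≤ C ∧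
        ∀ s t : Γ, φ (s⁻¹ * t) = ⟪ξ t, η s⟫_ℂ

/-! ### Ancestors in a rooted tree -/

/-- A tree with root `r` has a parent map: it sends `x` to its unique neighbour closer to `r`, and its
iterates lead from `x` to `r` in `d (r, x)` steps. -/
lemma exists_parent {X : Type*} {G : SimpleGraph X} (hG : G.IsTree) (r : X) :
    ∃ p : X → X, (∀ x, p^[G.dist r x] x = r) ∧
      ∀ x y, G.Adj x y → G.dist r x = G.dist r y + 1 → p x = y := by
  choose P hP using fun x => hG.connected.exists_path_of_dist r x
  have key : ∀ x y, G.Adj x y → G.dist r x = G.dist r y + 1 → (P x).penultimate = y := by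
    intro x y hxy hd
    have hQ : ((P y).concat hxy.symm).IsPath := by
      apply SimpleGraph.Walk.isPath_of_length_eq_dist
      rw [SimpleGraph.Walk.length_concat, (hP y).2, hd]
    have := hG.isAcyclic.subsingleton_path r x |>.elim ⟨_, hQ⟩ ⟨_, (hP x).1⟩
    have h2 : (P y).concat hxy.symm = P x := congrArg Subtype.val this
    rw [← h2, SimpleGraph.Walk.penultimate_concat]
  refine ⟨fun x => (P x).penultimate, ?_, key⟩
  suffices ∀ n x, G.dist r x = n → (fun x => (P x).penultimate)^[n] x = r from
    fun x => this _ x rfl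
  intro n
  induction n with
  | zero => intro x hx; exact (hG.connected.dist_eq_zero_iff.1 hx).symm
  | succ n ih =>
    intro x hx
    rw [Function.iterate_succ_apply]
    apply ih
    have hnil : ¬ (P x).Nil := by
      rw [← SimpleGraph.Walk.length_eq_zero_iff, (hP x).2, hx]; simp
    have hadj := SimpleGraph.Walk.adj_penultimate hnil
    have h2 : G.dist r (P x).penultimate ≤ n := by
      have := SimpleGraph.dist_le (P x).dropLast
      have h3 := congrArg SimpleGraph.Walk.length (SimpleGraph.Walk.concat_dropLast hadj)
      rw [SimpleGraph.Walk.length_concat, (hP x).2] at h3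
      omega
    rcases hG.dist_eq_dist_add_one_of_adj r hadj with h | h <;> omega

/-- Each vertex `x` of a tree emits an injective ray `q x` such that the rays of `x` and `y` merge after
`m` and `k` steps with `m + k = d (x, y)`, and coincide nowhere else. The point `q x i` is encoded as
the `i`-th iterate of the parent map at `x`, together with its height `d (r, x) - i`. Heights of
vertices of the tree are nonnegative, and the points of negative height form an infinite ray attached
at the root. -/
lemma exists_rays {X : Type*} {G : SimpleGraph X} (hG : G.IsTree) :
    ∃ q : X → ℕ → X × ℤ, (∀ x, Function.Injective (q x)) ∧
      ∀ x y, ∃ m k, m + k = G.dist x y ∧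
        ∀ i j, q x i = q y j ↔ ∃ l, i = m + l ∧ j = k + l := by
  obtain ⟨r⟩ := hG.connected.nonempty
  obtain ⟨p, hp0, hp⟩ := exists_parent hG r
  have hstep : ∀ x y, G.Adj x y →
      (p x = y ∧ G.dist r x = G.dist r y + 1) ∨ (p y = x ∧ G.dist r y = G.dist r x + 1) := by
    intro x y h
    rcases hG.dist_eq_dist_add_one_of_adj r h with h' | h'
    · exact .inl ⟨hp x y h h', h'⟩
    · exact .inr ⟨hp y x h.symm h', h'⟩
  have hclimb : ∀ n x, n ≤ G.dist r x → G.dist x (p^[n] x) ≤ n := by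
    intro n
    induction n with
    | zero => intro x _; simp
    | succ n ih =>
      intro x hx
      -- a neighbour of `x` on a geodesic to the root is the parent of `x`
      obtain ⟨w, hw⟩ := hG.connected.exists_walk_length_eq_dist x r
      cases w with
      | nil => simp at hx
      | @cons _ y _ hxy w =>
        have h1 := SimpleGraph.dist_le w
        rw [SimpleGraph.Walk.length_cons, SimpleGraph.dist_comm] at hw
        rw [SimpleGraph.dist_comm] at h1
        have h2 : p x = y ∧ G.dist r x = G.dist r y + 1 := by
          rcases hstep x y hxy with h | h
          · exact h
          · omega
        rw [Function.iterate_succ_apply, h2.1]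
        have h3 := ih y (by omega)
        have h4 := hG.connected.dist_triangle (u := x) (v := y) (w := p^[n] y)
        rw [SimpleGraph.dist_eq_one_iff_adj.2 hxy] at h4
        omega
  refine ⟨fun x i => (p^[i] x, (G.dist r x : ℤ) - i), ?_, ?_⟩
  · intro x i j h
    simp only [Prod.mk.injEq] at h
    omega
  intro x y
  simp only [Prod.mk.injEq]
  have hshift : ∀ i j l, p^[i] x = p^[j] y → p^[i + l] x = p^[j + l] y := by
    intro i j l h
    rw [add_comm i, add_comm j, Function.iterate_add_apply, h, ← Function.iterate_add_apply]
  classical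
  -- `m` is the first index at which the ray of `x` meets that of `y`
  have hex : ∃ i, ∃ j : ℕ, p^[i] x = p^[j] y ∧ (G.dist r x : ℤ) - i = (G.dist r y : ℤ) - j :=
    ⟨G.dist r x, G.dist r y, by rw [hp0, hp0], by ring⟩
  obtain ⟨k, hk1, hk2⟩ := Nat.find_spec hex
  have hmin := fun i => Nat.find_min' hex (m := i)
  set m := Nat.find hex
  have hmx : m ≤ G.dist r x := hmin _ ⟨G.dist r y, by rw [hp0, hp0], by ring⟩
  have hiff : ∀ i j : ℕ, (p^[i] x = p^[j] y ∧ (G.dist r x : ℤ) - i = (G.dist r y : ℤ) - j) ↔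
      ∃ l, i = m + l ∧ j = k + l := by
    intro i j
    constructor
    · intro h
      have := hmin i ⟨j, h⟩
      exact ⟨i - m, by omega, by omega⟩
    · rintro ⟨l, rfl, rfl⟩
      exact ⟨hshift _ _ _ hk1, by push_cast; linarith⟩
  refine ⟨m, k, le_antisymm ?_ ?_, hiff⟩
  · -- following a walk from `x` to `y` produces a coincidence `q x i = q y j`
    have hwalk : ∀ {a b : X} (w : G.Walk a b), ∃ i j : ℕ, i + j ≤ w.length ∧
        p^[i] a = p^[j] b ∧ (G.dist r a : ℤ) - i = (G.dist r b : ℤ) - j := by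
      intro a b w
      induction w with
      | nil => exact ⟨0, 0, by simp, rfl, by simp⟩
      | @cons a c b hac w ih =>
        obtain ⟨i, j, h1, h2, h3⟩ := ih
        rw [SimpleGraph.Walk.length_cons]
        rcases hstep a c hac with ⟨h, h'⟩ | ⟨h, h'⟩
        · exact ⟨i + 1, j, by omega, by rw [Function.iterate_succ_apply, h, h2],
            by push_cast; omega⟩
        · cases i with
          | zero =>
            refine ⟨0, j + 1, by omega, ?_, by push_cast; omega⟩
            rw [Function.iterate_succ_apply', ← h2, ← h]; rfl
          | succ i =>
            refine ⟨i, j, by omega, ?_, by push_cast at h3; omega⟩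
            rw [← h2, Function.iterate_succ_apply, h]
    obtain ⟨w, hw⟩ := hG.connected.exists_walk_length_eq_dist x y
    obtain ⟨i, j, h1, h2⟩ := hwalk w
    obtain ⟨l, rfl, rfl⟩ := (hiff i j).1 h2
    omega
  · have h1 := hclimb m x hmx
    have h2 := hclimb k y (by omega)
    have h3 := hG.connected.dist_triangle (u := x) (v := p^[m] x) (w := y)
    rw [hk1, SimpleGraph.dist_comm (u := p^[k] y)] at h3
    rw [hk1] at h1
    omega

/-! ### Hankel matrices and factorizations -/

/-- If `f` vanishes from `M` on, then the Hankel matrix `f (i + j) - f (i + j + 2)`, summed along the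
diagonal starting at `(m, k)`, telescopes to `f (m + k)`. Here `R` is the indicator of that diagonal. -/
lemma sum_hankel {M m k : ℕ} (f : ℕ → ℝ) (hf : ∀ n, M ≤ n → f n = 0)
    (R : ℕ → ℕ → Prop) [∀ i j, Decidable (R i j)]
    (hR : ∀ i j, R i j ↔ ∃ l, i = m + l ∧ j = k + l) :
    ∑ a : Fin M × Fin M, (if R a.1 a.2 then f (a.1 + a.2) - f (a.1 + a.2 + 2) else 0)
      = f (m + k) := by
  set F : ℕ × ℕ → ℝ := fun a => if R a.1 a.2 then f (a.1 + a.2) - f (a.1 + a.2 + 2) else 0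
  have h1 : ∑ a : Fin M × Fin M, F (a.1, a.2)
      = ∑ a ∈ Finset.range M ×ˢ Finset.range M, F a := by
    rw [Fintype.sum_prod_type, Finset.sum_product, Finset.sum_range]
    exact Finset.sum_congr rfl fun i _ => (Finset.sum_range fun j => F (i, j)).symm
  have h2 : ∑ a ∈ Finset.range M ×ˢ Finset.range M, F a
      = ∑ a ∈ Finset.range (m + k + M) ×ˢ Finset.range (m + k + M), F a := by
    apply Finset.sum_subset
    · intro a; simp only [Finset.mem_product, Finset.mem_range]; omega
    · intro a _ ha
      simp only [Finset.mem_product, Finset.mem_range] at ha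
      simp only [F]
      rw [hf _ (by omega), hf _ (by omega)]; simp
  have h3 : ∑ l ∈ Finset.range M, (f (m + k + 2 * l) - f (m + k + 2 * (l + 1)))
      = ∑ a ∈ Finset.range (m + k + M) ×ˢ Finset.range (m + k + M), F a := by
    apply Finset.sum_of_injOn (fun l => (m + l, k + l))
    · intro a _ b _ h; simpa using h
    · intro a ha
      simp only [Finset.coe_range, Set.mem_Iio] at ha
      simp only [Finset.coe_product, Finset.coe_range, Set.mem_prod, Set.mem_Iio]; omega
    · intro a ha hna
      simp only [F]
      split_ifs with h
      · obtain ⟨l, h1, h2⟩ := (hR _ _).1 h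
        by_cases hl : l < M
        · exact absurd ⟨l, by simpa using hl, Prod.ext h1.symm h2.symm⟩ hna
        · rw [hf _ (by omega), hf _ (by omega), sub_zero]
      · rfl
    · intro l _
      simp only [F]
      rw [if_pos ((hR _ _).2 ⟨l, rfl, rfl⟩)]
      congr 2 <;> ring
  rw [Finset.sum_range_sub' (fun l => f (m + k + 2 * l))] at h3
  rw [hf (m + k + 2 * M) (by omega)] at h3
  simpa using (h1.trans h2).trans h3.symm

/-- A kernel `∑ i j, (u i * u j + e i j) * [q x i = q y j]` built from injective sequences `q x` has a
factorization `⟪ξ x, η y⟫`. In terms of an orthonormal family `v`, the rank-one part `u i * u j` gives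
the vectors `∑ i, u i • v (q x i)` of norm at most one, and each entry `e i j` is split as
`(e i j / δ) * δ` in its own orthogonal copy of the space, which adds at most `δ ^ 2` to the squared
norms. -/
lemma exists_factorization {X : Type*} [Countable X] (M : ℕ) (q : X → ℕ → X × ℤ)
    (hq : ∀ x, Function.Injective (q x)) (u : ℕ → ℝ) (e : ℕ → ℕ → ℝ) (δ : ℝ) (hδ : 0 < δ)
    (hu : ∑ i ∈ Finset.range M, u i ^ 2 ≤ 1) (he : ∀ i j, |e i j| ≤ δ ^ 2) :
    ∃ ξ η : X → lp (fun _ : ℕ => ℂ) 2,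
      (∀ x, ‖ξ x‖ ^ 2 ≤ 1 + M ^ 2 * δ ^ 2) ∧ (∀ x, ‖η x‖ ^ 2 ≤ 1 + M ^ 2 * δ ^ 2) ∧
      ∀ x y, ⟪ξ x, η y⟫_ℂ = ((∑ a : Fin M × Fin M,
        open Classical in if q x a.1 = q y a.2 then u a.1 * u a.2 + e a.1 a.2 else 0 : ℝ) : ℂ) := by
  classical
  obtain ⟨c, hc⟩ := exists_injective_nat (Option (Fin M × Fin M) × (X × ℤ))
  obtain ⟨v, hv⟩ : ∃ v : Option (Fin M × Fin M) × (X × ℤ) → lp (fun _ : ℕ => ℂ) 2,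
      Orthonormal ℂ v := by
    refine ⟨(fun n => lp.single 2 n (1 : ℂ)) ∘ c, Orthonormal.comp ?_ c hc⟩
    rw [orthonormal_iff_ite]
    intro i j
    rw [lp.inner_single_left, lp.single_apply]
    simp [Pi.single_apply]
  -- indices of the basis vectors used by `ξ x` and by `η x`; the first component selects the copy of
  -- the space, `none` for the rank-one part and `some (i, j)` for the entry `e i j`
  let S : X → Fin M ⊕ (Fin M × Fin M) → Option (Fin M × Fin M) × (X × ℤ) := fun x =>
    Sum.elim (fun i => (none, q x i)) (fun a => (some a, q x a.1))
  let T : X → Fin M ⊕ (Fin M × Fin M) → Option (Fin M × Fin M) × (X × ℤ) := fun x =>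
    Sum.elim (fun i => (none, q x i)) (fun a => (some a, q x a.2))
  let α : Fin M ⊕ (Fin M × Fin M) → ℂ :=
    Sum.elim (fun i => (u i : ℂ)) (fun a => ((e a.1 a.2 / δ : ℝ) : ℂ))
  let β : Fin M ⊕ (Fin M × Fin M) → ℂ := Sum.elim (fun i => (u i : ℂ)) (fun _ => (δ : ℂ))
  have hS : ∀ x, Function.Injective (S x) := by
    rintro x (i | a) (j | b) h <;> simp [S] at h ⊢
    · exact Fin.ext (hq x h)
    · exact h.1
  have hT : ∀ x, Function.Injective (T x) := by
    rintro x (i | a) (j | b) h <;> simp [T] at h ⊢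
    · exact Fin.ext (hq x h)
    · exact h.1
  have hnorm : ∀ (U : Fin M ⊕ (Fin M × Fin M) → Option (Fin M × Fin M) × (X × ℤ)),
      Function.Injective U → ∀ γ : Fin M ⊕ (Fin M × Fin M) → ℂ,
      ‖∑ i, γ i • v (U i)‖ ^ 2 = ∑ i, ‖γ i‖ ^ 2 := by
    intro U hU γ
    have := (hv.comp U hU).inner_sum γ γ Finset.univ
    rw [inner_self_eq_norm_sq_to_K] at this
    simp only [Function.comp, Complex.conj_mul'] at this
    refine Complex.ofReal_injective ?_
    push_cast
    exact this
  have hu' : ∑ i : Fin M, u i ^ 2 ≤ 1 := by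
    rwa [← Finset.sum_range fun i => u i ^ 2]
  refine ⟨fun x => ∑ i, α i • v (S x i), fun x => ∑ i, β i • v (T x i), ?_, ?_, ?_⟩
  · intro x
    rw [hnorm _ (hS x), Fintype.sum_sum_type]
    refine add_le_add (by simpa [α] using hu') ?_
    calc ∑ a : Fin M × Fin M, ‖α (.inr a)‖ ^ 2 ≤ ∑ a : Fin M × Fin M, δ ^ 2 := by
          refine Finset.sum_le_sum fun a _ => ?_
          simp only [α, Sum.elim_inr, Complex.norm_real, Real.norm_eq_abs]
          rw [abs_div, abs_of_pos hδ]
          gcongr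
          rw [div_le_iff₀ hδ, ← sq]
          exact he _ _
      _ = M ^ 2 * δ ^ 2 := by simp [sq]
  · intro x
    rw [hnorm _ (hT x), Fintype.sum_sum_type]
    refine add_le_add (by simpa [β] using hu') (le_of_eq ?_)
    simp [β, sq]
  · intro x y
    simp only [sum_inner, inner_sum, inner_smul_left, inner_smul_right,
      orthonormal_iff_ite.1 hv]
    simp only [Fintype.sum_sum_type, S, T, α, β, Sum.elim_inl, Sum.elim_inr, Prod.mk.injEq,
      reduceCtorEq, false_and, true_and, if_false, mul_zero, Finset.sum_const_zero, add_zero,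
      zero_add, Option.some.injEq, Complex.conj_ofReal]
    have hd : ∀ a : Fin M × Fin M, ((δ : ℂ) * ∑ b : Fin M × Fin M, ((e b.1 b.2 / δ : ℝ) : ℂ) *
        if b = a ∧ q x b.1 = q y a.2 then 1 else 0) =
        if q x a.1 = q y a.2 then (e a.1 a.2 : ℂ) else 0 := by
      intro a
      rw [Finset.sum_eq_single a]
      · have : (δ : ℂ) ≠ 0 := by exact_mod_cast hδ.ne'
        split_ifs <;> simp_all [mul_div_cancel₀]
      · intro b _ hb; simp [hb]
      · simp
    simp only [hd, Finset.mul_sum]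
    rw [← Fintype.sum_prod_type_right'
      (f := fun i j : Fin M => (u j : ℂ) * ((u i : ℂ) * if q x i = q y j then 1 else 0)),
      ← Finset.sum_add_distrib]
    push_cast
    refine Finset.sum_congr rfl fun a _ => ?_
    split_ifs
    · push_cast; ring
    · simp

/-! ### Finiteness and invariance -/

lemma finite_ball {X : Type*} {G : SimpleGraph X} (hG : G.Connected)
    (hloc : ∀ v : X, (G.neighborSet v).Finite) (r : X) (n : ℕ) : {x | G.dist r x ≤ n}.Finite := by
  induction n with
  | zero =>
    refine (Set.finite_singleton r).subset fun x hx => ?_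
    exact (hG.dist_eq_zero_iff.1 (Nat.le_zero.1 hx)).symm
  | succ n ih =>
    refine (ih.union (ih.biUnion fun v _ => hloc v)).subset fun x hx => ?_
    obtain ⟨w, hw⟩ := hG.exists_walk_length_eq_dist x r
    cases w with
    | nil => exact .inl (by simp)
    | @cons _ y _ hxy w =>
      right
      have h1 := SimpleGraph.dist_le w
      rw [SimpleGraph.Walk.length_cons] at hw
      rw [SimpleGraph.dist_comm] at h1 hw
      simp only [Set.mem_ofPred_eq] at hx
      exact Set.mem_biUnion (show G.dist r y ≤ n by omega) hxy.symm

lemma graph_dist_smul {Γ X : Type*} [Group Γ] [MulAction Γ X] {G : SimpleGraph X} (hG : G.Connected)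
    (haut : ∀ (g : Γ) (x y : X), G.Adj (g • x) (g • y) ↔ G.Adj x y) (g : Γ) (x y : X) :
    G.dist (g • x) (g • y) = G.dist x y := by
  have h : ∀ (g : Γ) (x y : X), G.dist (g • x) (g • y) ≤ G.dist x y := by
    intro g x y
    obtain ⟨w, hw⟩ := hG.exists_walk_length_eq_dist x y
    let f : G →g G := ⟨fun x => g • x, fun {a b} h => (haut g a b).2 h⟩
    rw [← hw, ← SimpleGraph.Walk.length_map f]
    exact SimpleGraph.dist_le _
  refine le_antisymm (h g x y) ?_
  simpa using h g⁻¹ (g • x) (g • y)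

/-- The support of the multiplier is finite: the orbit of `x₀` meets a ball in finitely many points, and
the elements moving `x₀` to a given point form a coset of its stabiliser. -/
lemma finite_return {Γ X : Type*} [Group Γ] [MulAction Γ X] {G : SimpleGraph X}
    (hG : G.Connected) (hloc : ∀ v : X, (G.neighborSet v).Finite) (x₀ : X)
    (hstab : {g : Γ | g • x₀ = x₀}.Finite) (n : ℕ) : {g : Γ | G.dist (g • x₀) x₀ ≤ n}.Finite := by
  have h1 : {g : Γ | G.dist (g • x₀) x₀ ≤ n} = (fun g : Γ => g • x₀) ⁻¹' {x | G.dist x₀ x ≤ n} := by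
    ext g; simp [SimpleGraph.dist_comm]
  rw [h1]
  refine Set.Finite.preimage' (finite_ball hG hloc x₀ n) fun x _ => ?_
  by_cases hx : ∃ g : Γ, g • x₀ = x
  · obtain ⟨g, rfl⟩ := hx
    refine (hstab.image fun k => g * k).subset fun k hk => ⟨g⁻¹ * k, ?_, by simp⟩
    simp only [Set.mem_preimage, Set.mem_singleton_iff] at hk
    simp [mul_smul, hk]
  · convert Set.finite_empty
    ext g; simpa using fun h => hx ⟨g, h⟩

/-! ### The truncated radial multiplier -/

lemma exists_params (L : ℕ) {ε C : ℝ} (hε : 0 < ε) (hC : 1 < C) :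
    ∃ (r : ℝ) (N : ℕ), 0 < r ∧ r < 1 ∧ 1 - r ^ L ≤ ε ∧ L ≤ N ∧
      1 + ((N + 2 : ℕ) : ℝ) ^ 2 * r ^ N ≤ C := by
  obtain ⟨r, hr0, hr1, hrL⟩ : ∃ r : ℝ, 0 < r ∧ r < 1 ∧ 1 - r ^ L ≤ ε := by
    have h1 : Filter.Tendsto (fun r : ℝ => 1 - r ^ L) (nhdsWithin 1 (Set.Iio 1)) (nhds 0) := by
      have : Continuous fun r : ℝ => 1 - r ^ L := by fun_prop
      simpa using (this.tendsto 1).mono_left nhdsWithin_le_nhds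
    obtain ⟨r, h, h'⟩ := ((h1.eventually_le_const hε).and
      (Ioo_mem_nhdsLT (show (0 : ℝ) < 1 by norm_num))).exists
    exact ⟨r, h'.1, h'.2, h⟩
  have h2 := tendsto_pow_const_mul_const_pow_of_abs_lt_one 2 (r := r)
    (by rw [abs_of_pos hr0]; exact hr1)
  obtain ⟨K, h3, h4⟩ := ((h2.eventually_le_const
    (show (0 : ℝ) < r ^ 2 * (C - 1) by have := sub_pos.2 hC; positivity)).and
    (Filter.eventually_ge_atTop (L + 2))).exists
  obtain ⟨N, rfl⟩ : ∃ N, K = N + 2 := ⟨K - 2, by omega⟩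
  refine ⟨r, N, hr0, hr1, hrL, by omega, ?_⟩
  have h5 : r ^ 2 * (((N + 2 : ℕ) : ℝ) ^ 2 * r ^ N) ≤ r ^ 2 * (C - 1) := by
    refine le_trans (le_of_eq ?_) h3; ring
  have := le_of_mul_le_mul_left h5 (by positivity)
  linarith

/-- The truncated kernel `r ^ d (x, y)` has a factorization of norm at most `1 + (N + 2) ^ 2 * r ^ N`. -/
lemma exists_truncated {X : Type*} [Countable X] {G : SimpleGraph X} (hG : G.IsTree) {r : ℝ}
    (hr0 : 0 < r) (hr1 : r < 1) (N : ℕ) :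
    ∃ ξ η : X → lp (fun _ : ℕ => ℂ) 2,
      (∀ x, ‖ξ x‖ ^ 2 ≤ 1 + ((N + 2 : ℕ) : ℝ) ^ 2 * r ^ N) ∧
      (∀ x, ‖η x‖ ^ 2 ≤ 1 + ((N + 2 : ℕ) : ℝ) ^ 2 * r ^ N) ∧
      ∀ x y, ⟪ξ x, η y⟫_ℂ = ((if G.dist x y < N + 2 then r ^ G.dist x y else 0 : ℝ) : ℂ) := by
  obtain ⟨q, hq, hmeet⟩ := exists_rays hG
  set f : ℕ → ℝ := fun n => if n < N + 2 then r ^ n else 0 with hf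
  have hr2 : 0 ≤ 1 - r ^ 2 := by nlinarith
  -- `(c * r ^ i) * (c * r ^ j)` is the Hankel matrix of the untruncated function `n ↦ r ^ n`
  set c := Real.sqrt (1 - r ^ 2)
  have hc : c ^ 2 = 1 - r ^ 2 := Real.sq_sqrt hr2
  have hδ : Real.sqrt (r ^ N) ^ 2 = r ^ N := Real.sq_sqrt (by positivity)
  have hu : ∑ i ∈ Finset.range (N + 2), (c * r ^ i) ^ 2 ≤ 1 := by
    have h : ∀ n, ∑ i ∈ Finset.range n, (c * r ^ i) ^ 2 = 1 - (r ^ n) ^ 2 := by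
      intro n
      induction n with
      | zero => simp
      | succ n ih => rw [Finset.sum_range_succ, ih, mul_pow, hc]; ring
    rw [h]
    nlinarith [sq_nonneg (r ^ (N + 2))]
  have he : ∀ i j, |f (i + j) - f (i + j + 2) - (c * r ^ i) * (c * r ^ j)| ≤
      Real.sqrt (r ^ N) ^ 2 := by
    intro i j
    rw [hδ, show (c * r ^ i) * (c * r ^ j) = (1 - r ^ 2) * r ^ (i + j) by
      rw [← hc]; ring]
    generalize i + j = n
    have hn : 0 < r ^ n := by positivity
    have hN : 0 < r ^ N := by positivity
    simp only [hf]
    rcases lt_or_ge n N with h | h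
    · rw [if_pos (by omega), if_pos (by omega)]
      rw [show r ^ n - r ^ (n + 2) - (1 - r ^ 2) * r ^ n = 0 by ring, abs_zero]
      exact hN.le
    · have h4 : r ^ n ≤ r ^ N := pow_le_pow_of_le_one hr0.le hr1.le h
      rw [if_neg (show ¬ n + 2 < N + 2 by omega), abs_le]
      have h5 : 0 < r ^ 2 * r ^ n := by positivity
      have h6 : 0 ≤ (1 - r ^ 2) * r ^ n := by positivity
      split_ifs <;> constructor <;> nlinarith
  obtain ⟨ξ, η, h1, h2, h3⟩ := exists_factorization (N + 2) q hq (fun i => c * r ^ i)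
    (fun i j => f (i + j) - f (i + j + 2) - (c * r ^ i) * (c * r ^ j)) (Real.sqrt (r ^ N))
    (by positivity) hu he
  rw [hδ] at h1 h2
  refine ⟨ξ, η, h1, h2, fun x y => ?_⟩
  obtain ⟨m, k, hmk, hR⟩ := hmeet x y
  rw [h3]
  congr 1
  classical
  have := sum_hankel (M := N + 2) f (fun n hn => if_neg (by omega)) (fun i j => q x i = q y j) hR
  rw [hmk] at this
  rw [show (if G.dist x y < N + 2 then r ^ G.dist x y else 0) = f (G.dist x y) from rfl, ← this]
  refine Finset.sum_congr rfl fun a _ => ?_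
  split_ifs <;> ring

/-- **Szwarc.** A group acting by graph automorphisms on a locally finite tree with a
finite vertex stabiliser is weakly amenable with Cowling–Haagerup constant `1`. -/
theorem szwarc_tree_weaklyAmenable {Γ X : Type*} [Group Γ] [MulAction Γ X]
    (G : SimpleGraph X) (hG : G.IsTree)
    (hloc : ∀ v : X, (G.neighborSet v).Finite)
    (haut : ∀ (g : Γ) (x y : X), G.Adj (g • x) (g • y) ↔ G.Adj x y)
    (x₀ : X) (hstab : {g : Γ | g • x₀ = x₀}.Finite) :
    ∀ C : ℝ, 1 < C → WeaklyAmenableWithConst Γ C := by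
  intro C hC F ε hε
  have : Countable X := by
    rw [← Set.countable_univ_iff]
    refine (Set.countable_iUnion fun n =>
      (finite_ball hG.connected hloc x₀ n).countable).mono fun x _ => ?_
    exact Set.mem_iUnion.2 ⟨G.dist x₀ x, le_refl (G.dist x₀ x)⟩
  set L := F.sup fun g => G.dist (g • x₀) x₀
  obtain ⟨r, N, hr0, hr1, hrL, hLN, hrC⟩ := exists_params L hε hC
  obtain ⟨ξ, η, h1, h2, h3⟩ := exists_truncated hG hr0 hr1 N
  have hC0 : 0 ≤ C := by linarith
  refine ⟨fun g => ((if G.dist (g • x₀) x₀ < N + 2 then r ^ G.dist (g • x₀) x₀ else 0 : ℝ) : ℂ),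
    ?_, ?_, lp (fun _ : ℕ => ℂ) 2, inferInstance, inferInstance, inferInstance,
    fun t => ξ (t • x₀), fun s => η (s • x₀), Real.sqrt C, Real.sqrt C,
    Real.sqrt_nonneg _, Real.sqrt_nonneg _,
    fun t => Real.le_sqrt_of_sq_le ((h1 _).trans hrC),
    fun s => Real.le_sqrt_of_sq_le ((h2 _).trans hrC), (Real.mul_self_sqrt hC0).le, ?_⟩
  · refine (finite_return hG.connected hloc x₀ hstab (N + 2)).subset fun g hg => ?_
    by_contra h
    simp only [Set.mem_ofPred_eq, not_le] at h
    exact hg (by simp [h.le])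
  · intro s hs
    have hsL : G.dist (s • x₀) x₀ ≤ L := Finset.le_sup (f := fun g => G.dist (g • x₀) x₀) hs
    simp only
    rw [if_pos (by omega), ← Complex.ofReal_one, ← Complex.ofReal_sub, Complex.norm_real,
      Real.norm_eq_abs, abs_sub_comm, abs_of_nonneg (by
        have := pow_le_one₀ hr0.le hr1.le (n := G.dist (s • x₀) x₀); linarith)]
    have := pow_le_pow_of_le_one hr0.le hr1.le hsL
    linarith
  · intro s t
    have h : G.dist ((s⁻¹ * t) • x₀) x₀ = G.dist (t • x₀) (s • x₀) := by
      rw [← graph_dist_smul hG.connected haut s, mul_smul, smul_inv_smul]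
    simp only [h, h3]
end
end

section
/- Let m, n ∈ ℤ and let BS(m, n) = ⟨a, b | b a^m b⁻¹ = a^n⟩ be the Baumslag–Solitar group, i.e. the quotient of the free group on two generators a, b by the normal closure of the single relator b a^m b⁻¹ a^{−n}. Then BS(m, n) is weakly amenable with Cowling–Haagerup constant Λ(BS(m, n)) = 1, i.e. weakly amenable with constant at most C for every C > 1. -/
/-!
The proof combines two facts about an HNN extension `Γ` of `ℤ` along subgroups of finite index.

*The tree.* `Γ` acts on its Bass–Serre tree, which is locally finite. On any tree the kernels
`r ^ d(x, y)`, `0 < r < 1`, are positive definite: fix an end, let `x₀, x₁, …` be the ray from `x`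
to this end, and use the vectors `∑ i, r ^ i e(xᵢ)`. The kernel is a sum over pairs `(i, j)` with
`xᵢ = yⱼ` of terms `r ^ (i + j)`, each of which is itself a Schur multiplier of norm at most
`r ^ (i + j)`; dropping the terms with `i + j > N` therefore costs at most `(N + 1) ^ 2 * r ^ N` in
norm and leaves a kernel supported on pairs at distance at most `N`. Letting `r → 1` and `N → ∞`
gives functions on `Γ` that tend to `1`, have multiplier norm tending to `1`, and are supported on
balls of the tree (`TreeLike.exists_treeFun`). Trees enter through words: the vertices are cosets of
the vertex group, and the path from a vertex to the root is a list of letters (`TreeLike`), which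
for HNN extensions comes from Britton's normal form (`treeLike_hnn`).

*The vertex group.* `Γ` also acts on `ℚ × ℤ`, the generator `a` of `ℤ` by `(x, k) ↦ (x + q ^ k, k)`
with `q = n / m` and the stable letter by `(x, k) ↦ (x, k - 1)`. This action has a Følner sequence
(`folner_shift`, `folner_lower`) because it factors through a solvable group of affine maps, and
`ℤ` acts freely. The functions `stay` of the Følner sets are normalized positive definite, tend
to `1`, and have finite support on every ball of the tree.

The products of the two kinds of functions are finitely supported, tend to `1`, and have norm
tending to `1` (`TreeLike.weaklyAmenable`). This proves the result for `m, n ≠ 0`. If exactly one of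
`m`, `n` is zero, then `BS(m, n)` is an HNN extension of a finite cyclic group, and `BS(0, 0)` is
free; both act on locally finite trees with finite stabilizers, so the first kind of functions
suffices.
-/

open scoped InnerProductSpace

noncomputable section

/-- The Baumslag–Solitar group `BS(m, n) = ⟨a, b ∣ b a^m b⁻¹ = a^n⟩`: the quotient of the
free group on the two generators `a = FreeGroup.of false` and `b = FreeGroup.of true` by
the normal closure of the single relator `b a^m b⁻¹ a^{−n}`. -/
def BaumslagSolitar (m n : ℤ) : Type :=
  PresentedGroup ({FreeGroup.of true * (FreeGroup.of false) ^ m * (FreeGroup.of true)⁻¹ *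
    (FreeGroup.of false) ^ (-n)} : Set (FreeGroup Bool))

instance (m n : ℤ) : Group (BaumslagSolitar m n) := by
  unfold BaumslagSolitar; infer_instance


/-! ### Schur multipliers -/

/-- The kernel `k` on `Γ × Γ` is a Schur multiplier of norm at most `C`, witnessed by vectors
`ξ t`, `η s` of norm at most `√C` in an inner product space (completeness is not required). -/
def SchurBdd {Γ : Type} (k : Γ → Γ → ℂ) (C : ℝ) : Prop :=
  ∃ (H : Type) (_ : NormedAddCommGroup H) (_ : InnerProductSpace ℂ H) (ξ η : Γ → H),
    (∀ t, ‖ξ t‖ ^ 2 ≤ C) ∧ (∀ s, ‖η s‖ ^ 2 ≤ C) ∧ ∀ s t, k s t = ⟪ξ t, η s⟫_ℂ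

namespace SchurBdd

variable {Γ : Type} {k k' : Γ → Γ → ℂ} {C C' : ℝ}

theorem mono (h : SchurBdd k C) (hC : C ≤ C') : SchurBdd k C' := by
  obtain ⟨H, i1, i2, ξ, η, h1, h2, h3⟩ := h
  exact ⟨H, i1, i2, ξ, η, fun t => (h1 t).trans hC, fun s => (h2 s).trans hC, h3⟩

theorem congr (h : SchurBdd k C) (hk : ∀ s t, k' s t = k s t) : SchurBdd k' C := by
  have : k' = k := by funext s t; exact hk s t
  rwa [this]

theorem zero : SchurBdd (fun _ _ : Γ => 0) 0 :=
  ⟨ℂ, inferInstance, inferInstance, fun _ => 0, fun _ => 0, by simp, by simp, by simp⟩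

theorem one : SchurBdd (fun _ _ : Γ => 1) 1 :=
  ⟨ℂ, inferInstance, inferInstance, fun _ => 1, fun _ => 1, by simp, by simp, by simp⟩

/-- The norm is subadditive: use the orthogonal direct sum. -/
theorem add (h : SchurBdd k C) (h' : SchurBdd k' C') :
    SchurBdd (fun s t => k s t + k' s t) (C + C') := by
  obtain ⟨H, i1, i2, ξ, η, h1, h2, h3⟩ := h
  obtain ⟨H', i1', i2', ξ', η', h1', h2', h3'⟩ := h'
  refine ⟨WithLp 2 (H × H'), inferInstance, inferInstance, fun t => WithLp.toLp 2 (ξ t, ξ' t),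
    fun s => WithLp.toLp 2 (η s, η' s), fun t => ?_, fun s => ?_, fun s t => ?_⟩
  · rw [WithLp.prod_norm_sq_eq_of_L2]
    exact add_le_add (h1 t) (h1' t)
  · rw [WithLp.prod_norm_sq_eq_of_L2]
    exact add_le_add (h2 s) (h2' s)
  · simp only [h3, h3', WithLp.prod_inner_apply]

theorem sum {ι : Type*} (I : Finset ι) (K : ι → Γ → Γ → ℂ) (c : ι → ℝ)
    (h : ∀ i ∈ I, SchurBdd (K i) (c i)) :
    SchurBdd (fun s t => ∑ i ∈ I, K i s t) (∑ i ∈ I, c i) := by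
  classical
  induction I using Finset.induction_on with
  | empty => simpa using zero
  | insert a I ha ih =>
    simp only [Finset.sum_insert ha]
    exact (h a (by simp)).add (ih fun i hi => h i (by simp [hi]))

/-- The norm is submultiplicative: use the tensor product. -/
theorem mul (h : SchurBdd k C) (h' : SchurBdd k' C') (hC : 0 ≤ C) :
    SchurBdd (fun s t => k s t * k' s t) (C * C') := by
  obtain ⟨H, i1, i2, ξ, η, h1, h2, h3⟩ := h
  obtain ⟨H', i1', i2', ξ', η', h1', h2', h3'⟩ := h'
  refine ⟨TensorProduct ℂ H H', inferInstance, inferInstance, fun t => ξ t ⊗ₜ[ℂ] ξ' t,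
    fun s => η s ⊗ₜ[ℂ] η' s, fun t => ?_, fun s => ?_, fun s t => ?_⟩
  · rw [TensorProduct.norm_tmul, mul_pow]
    exact mul_le_mul (h1 t) (h1' t) (by positivity) hC
  · rw [TensorProduct.norm_tmul, mul_pow]
    exact mul_le_mul (h2 s) (h2' s) (by positivity) hC
  · simp only [h3, h3', TensorProduct.inner_tmul]

theorem smul (h : SchurBdd k C) (c : ℂ) {c' : ℝ} (hc' : 0 < c') (hc : ‖c‖ ≤ c') :
    SchurBdd (fun s t => c * k s t) (c' * C) := by
  obtain ⟨H, i1, i2, ξ, η, h1, h2, h3⟩ := h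
  have hq : 0 < √c' := Real.sqrt_pos.2 hc'
  have hq2 : √c' ^ 2 = c' := Real.sq_sqrt hc'.le
  refine ⟨H, i1, i2, fun t => ((√c' : ℝ) : ℂ) • ξ t, fun s => (c / ((√c' : ℝ) : ℂ)) • η s,
    fun t => ?_, fun s => ?_, fun s t => ?_⟩
  · rw [norm_smul, mul_pow, Complex.norm_real, Real.norm_of_nonneg hq.le, hq2]
    exact mul_le_mul_of_nonneg_left (h1 t) hc'.le
  · rw [norm_smul, mul_pow, norm_div, Complex.norm_real, Real.norm_of_nonneg hq.le, div_pow, hq2]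
    refine mul_le_mul ?_ (h2 s) (by positivity) hc'.le
    rw [div_le_iff₀ hc']
    nlinarith [norm_nonneg c]
  · simp only [inner_smul_left, inner_smul_right, h3, Complex.conj_ofReal, ← mul_assoc]
    rw [div_mul_cancel₀ _ (Complex.ofReal_ne_zero.2 hq.ne')]

theorem norm_le (h : SchurBdd k C) (s t : Γ) : ‖k s t‖ ≤ C := by
  obtain ⟨H, i1, i2, ξ, η, h1, h2, h3⟩ := h
  rw [h3]
  refine (norm_inner_le_norm _ _).trans ?_
  nlinarith [h1 t, h2 s, sq_nonneg (‖ξ t‖ - ‖η s‖)]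

end SchurBdd

/-- Every set is the index set of an orthonormal family: the point masses in `ℓ²`. -/
theorem exists_pointMasses (V : Type) : ∃ (H : Type) (_ : NormedAddCommGroup H)
    (_ : InnerProductSpace ℂ H) (e : V → H), Orthonormal ℂ e := by
  classical
  refine ⟨lp (fun _ : V => ℂ) 2, inferInstance, inferInstance,
    fun v => lp.single 2 v (1 : ℂ), ?_⟩
  rw [orthonormal_iff_ite]
  intro v w
  rw [lp.inner_single_left]
  by_cases h : v = w
  · subst h; simp
  · simp [h]

/-- A finitely supported Herz–Schur multiplier gives the data required for weak amenability;
the inner product space is completed here. -/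
theorem weaklyAmenable_of_schurBdd {Γ : Type} [Group Γ] {C : ℝ} (hC : 0 ≤ C)
    (h : ∀ (F : Finset Γ) (ε : ℝ), 0 < ε → ∃ φ : Γ → ℂ, (Function.support φ).Finite ∧
      (∀ s ∈ F, ‖φ s - 1‖ ≤ ε) ∧ SchurBdd (fun s t => φ (s⁻¹ * t)) C) :
    WeaklyAmenableWithConst Γ C := by
  intro F ε hε
  obtain ⟨φ, h1, h2, H, i1, i2, ξ, η, h3, h4, h5⟩ := h F ε hε
  refine ⟨φ, h1, h2, UniformSpace.Completion H, inferInstance, inferInstance, inferInstance,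
    fun t => (ξ t : UniformSpace.Completion H), fun s => (η s : UniformSpace.Completion H),
    √C, √C, Real.sqrt_nonneg _, Real.sqrt_nonneg _, fun t => ?_, fun s => ?_,
    (Real.mul_self_sqrt hC).le, fun s t => ?_⟩
  · rw [UniformSpace.Completion.norm_coe]
    exact Real.le_sqrt_of_sq_le (h3 t)
  · rw [UniformSpace.Completion.norm_coe]
    exact Real.le_sqrt_of_sq_le (h4 s)
  · rw [UniformSpace.Completion.inner_coe]
    exact h5 s t

/-- Weak amenability passes to subgroups. -/
theorem WeaklyAmenableWithConst.of_injective {Γ Δ : Type} [Group Γ] [Group Δ] {C : ℝ}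
    (f : Γ →* Δ) (hf : Function.Injective f) (h : WeaklyAmenableWithConst Δ C) :
    WeaklyAmenableWithConst Γ C := by
  classical
  intro F ε hε
  obtain ⟨φ, h1, h2, H, i1, i2, i3, ξ, η, A, B, hA, hB, hξ, hη, hAB, h3⟩ := h (F.image f) ε hε
  refine ⟨φ ∘ f, ?_, fun s hs => h2 _ (Finset.mem_image_of_mem _ hs), H, i1, i2, i3, ξ ∘ f, η ∘ f,
    A, B, hA, hB, fun t => hξ _, fun t => hη _, hAB, fun s t => by simp [h3]⟩
  rw [Function.support_comp_eq_preimage]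
  exact h1.preimage hf.injOn

/-! ### Groups acting on trees -/

/-- Products of `n` elements of `S` followed by an element of `G`. -/
def letterBall {Γ : Type} [Group Γ] (G : Subgroup Γ) (S : Set Γ) : ℕ → Set Γ
  | 0 => G
  | n + 1 => {g | ∃ σ ∈ S, ∃ b ∈ letterBall G S n, g = σ * b}

/-- A combinatorial form of an action of `Γ` on a rooted tree. The vertices are the right cosets
`G w`, and `L w` is the list of edge labels on the path from the vertex `G w` to the root.
Two vertices `G w`, `G w'` are adjacent when `w' * w⁻¹ ∈ S`, so right translations preserve
adjacency; `step` and `descend` say that the neighbours of a vertex are its parent (obtained by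
deleting the first letter) and vertices of which it is the parent. -/
structure TreeLike {Γ α : Type} [Group Γ] (G : Subgroup Γ) (S : Set Γ) (L : Γ → List α) :
    Prop where
  nonempty : S.Nonempty
  inv_mem : ∀ σ ∈ S, σ⁻¹ ∈ S
  mul_mem : ∀ g ∈ G, ∀ σ ∈ S, g * σ ∈ S
  eq_iff : ∀ w w', L w = L w' ↔ w' * w⁻¹ ∈ G
  step : ∀ σ ∈ S, ∀ w, (∃ a, L (σ * w) = a :: L w) ∨ ∃ a, L w = a :: L (σ * w)
  descend : ∀ w a l, L w = a :: l → ∃ σ ∈ S, L (σ * w) = l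
  finite : ∃ R : Set Γ, R.Finite ∧ ∀ σ ∈ S, ∃ r ∈ R, ∃ g ∈ G, σ = r * g

namespace TreeLike

variable {Γ α : Type} [Group Γ] {G : Subgroup Γ} {S : Set Γ} {L : Γ → List α}

theorem ball_mul_mem (h : TreeLike G S L) (n : ℕ) :
    ∀ b ∈ letterBall G S n, ∀ σ ∈ S, b * σ ∈ letterBall G S (n + 1) := by
  induction n with
  | zero =>
    intro b hb σ hσ
    exact ⟨b * σ, h.mul_mem b hb σ hσ, 1, G.one_mem, by simp⟩
  | succ n ih =>
    rintro _ ⟨τ, hτ, b, hb, rfl⟩ σ hσ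
    exact ⟨τ, hτ, b * σ, ih b hb σ hσ, by group⟩

theorem ball_add_two (h : TreeLike G S L) {n : ℕ} {b : Γ} (hb : b ∈ letterBall G S n) :
    b ∈ letterBall G S (n + 2) := by
  obtain ⟨σ, hσ⟩ := h.nonempty
  exact ⟨σ⁻¹, h.inv_mem σ hσ, σ * b, ⟨σ, hσ, b, hb, rfl⟩, by group⟩

theorem mul_ball_mem (h : TreeLike G S L) (n : ℕ) {g b : Γ} (hg : g ∈ G)
    (hb : b ∈ letterBall G S n) : g * b ∈ letterBall G S n := by
  cases n with
  | zero => exact G.mul_mem hg hb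
  | succ n =>
    obtain ⟨σ, hσ, c, hc, rfl⟩ := hb
    exact ⟨g * σ, h.mul_mem g hg σ hσ, c, hc, by group⟩

/-- The tree is locally finite: a ball is covered by finitely many left cosets of `G`. -/
theorem ball_finite (h : TreeLike G S L) (n : ℕ) :
    ∃ R : Set Γ, R.Finite ∧ ∀ b ∈ letterBall G S n, ∃ r ∈ R, ∃ g ∈ G, b = r * g := by
  induction n with
  | zero => exact ⟨{1}, Set.finite_singleton 1, fun b hb => ⟨1, rfl, b, hb, by simp⟩⟩
  | succ n ih =>
    obtain ⟨R, hR, hR'⟩ := ih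
    obtain ⟨T, hT, hT'⟩ := h.finite
    refine ⟨Set.image2 (· * ·) T R, hT.image2 _ hR, ?_⟩
    rintro _ ⟨σ, hσ, b, hb, rfl⟩
    obtain ⟨t, ht, g, hg, rfl⟩ := hT' σ hσ
    obtain ⟨r, hr, g', hg', e⟩ := hR' _ (h.mul_ball_mem n hg hb)
    exact ⟨t * r, ⟨t, ht, r, hr, rfl⟩, g', hg', by rw [mul_assoc, e, mul_assoc]⟩

/-- The `i`-th vertex on the ray from the vertex of `w` to the end of the tree obtained by attaching
a half-line to the root. The integer is the height of the vertex, the root having height `0`; it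
distinguishes the vertices of the half-line, which all carry the empty list. -/
def ray (L : Γ → List α) (i : ℕ) (w : Γ) : List α × ℤ :=
  ((L w).drop i, (L w).length - i)

theorem ray_inj {Δ β : Type} {L : Δ → List β} {i j : ℕ} {w : Δ} (e : ray L i w = ray L j w) : i = j := by
  have := congrArg Prod.snd e
  simp only [ray] at this
  omega

/-- A path of length `n` in the tree makes the rays from its endpoints meet after `i` and `j`
steps for some `i + j = n`. -/
theorem exists_ray_eq (h : TreeLike G S L) (n : ℕ) : ∀ w w' : Γ, w' * w⁻¹ ∈ letterBall G S n →
    ∃ i j, i + j = n ∧ ray L i w = ray L j w' := by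
  induction n with
  | zero =>
    intro w w' hw
    exact ⟨0, 0, rfl, by simp only [ray, (h.eq_iff w w').2 hw]⟩
  | succ n ih =>
    rintro w w' ⟨σ, hσ, b, hb, e⟩
    have e2 : w' = σ * (b * w) := by rw [← mul_assoc, ← e]; group
    obtain ⟨i, j, hij, hr⟩ := ih w (b * w) (by simpa using hb)
    simp only [ray, Prod.mk.injEq] at hr
    rcases h.step σ hσ (b * w) with ⟨a, ha⟩ | ⟨a, ha⟩
    · refine ⟨i, j + 1, by omega, ?_⟩
      rw [← e2] at ha
      simp only [ray, Prod.mk.injEq, ha, List.drop_succ_cons, List.length_cons]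
      exact ⟨hr.1, by push_cast; omega⟩
    · rw [← e2] at ha
      rw [ha] at hr
      refine ⟨i + 1, j, by omega, ?_⟩
      simp only [ray, Prod.mk.injEq]
      constructor
      · rw [← List.drop_drop, hr.1, List.drop_drop, List.drop_succ_cons]
      · have := hr.2
        rw [List.length_cons] at this
        push_cast at this ⊢
        omega

/-- Converse to `exists_ray_eq`. Meeting points on the attached half-line are moved back to the
root, which shortens the path by an even number. -/
theorem mem_ball_of_ray_eq (h : TreeLike G S L) (n : ℕ) : ∀ (w w' : Γ) (i j : ℕ), i + j = n →
    ray L i w = ray L j w' → w' * w⁻¹ ∈ letterBall G S n := by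
  induction n using Nat.strong_induction_on with
  | _ n ih =>
  intro w w' i j hij hr
  simp only [ray, Prod.mk.injEq] at hr
  obtain ⟨hr1, hr2⟩ := hr
  cases j with
  | zero =>
    cases i with
    | zero =>
      subst hij
      exact (h.eq_iff w w').1 (by simpa using hr1)
    | succ i =>
      rcases hL : L w with _ | ⟨a, l⟩
      · rw [hL] at hr2
        simp only [List.length_nil] at hr2
        push_cast at hr2
        omega
      · obtain ⟨σ, hσ, e⟩ := h.descend w a l hL
        rw [hL] at hr1 hr2
        have := ih i (by omega) (σ * w) w' i 0 rfl (by
          simp only [ray, Prod.mk.injEq, e]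
          simp only [List.drop_succ_cons, List.length_cons] at hr1 hr2
          exact ⟨hr1, by push_cast at hr2 ⊢; omega⟩)
        have h2 := h.ball_mul_mem i _ this σ hσ
        rw [show n = i + 1 by omega]
        convert h2 using 1
        group
  | succ j =>
    rcases hL : L w' with _ | ⟨a, l⟩
    · rw [hL] at hr1 hr2
      simp only [List.length_nil, List.drop_nil] at hr1 hr2
      have hi := List.drop_eq_nil_iff.1 hr1
      push_cast at hr2
      obtain ⟨i, rfl⟩ : ∃ k, i = k + 1 := ⟨i - 1, by omega⟩
      have := ih (i + j) (by omega) w w' i j rfl (by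
        simp only [ray, Prod.mk.injEq, hL, List.drop_nil, List.length_nil]
        exact ⟨List.drop_eq_nil_iff.2 (by omega), by push_cast at hr2 ⊢; omega⟩)
      rw [show n = i + j + 2 by omega]
      exact h.ball_add_two this
    · obtain ⟨σ, hσ, e⟩ := h.descend w' a l hL
      rw [hL] at hr1 hr2
      have := ih (i + j) (by omega) w (σ * w') i j rfl (by
        simp only [ray, Prod.mk.injEq, e]
        simp only [List.drop_succ_cons, List.length_cons] at hr1 hr2
        exact ⟨hr1, by push_cast at hr2 ⊢; omega⟩)
      rw [show n = i + j + 1 by omega]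
      exact ⟨σ⁻¹, h.inv_mem σ hσ, _, this, by group⟩

theorem exists_mem_ball (h : TreeLike G S L) (g : Γ) : ∃ n, g ∈ letterBall G S n :=
  ⟨_, by
    simpa using h.mem_ball_of_ray_eq _ 1 g (L 1).length (L g).length rfl (by simp [ray])⟩

theorem mem_ball_add_two_mul (h : TreeLike G S L) {n : ℕ} {g : Γ} (hg : g ∈ letterBall G S n)
    (k : ℕ) : g ∈ letterBall G S (n + 2 * k) := by
  induction k with
  | zero => simpa using hg
  | succ k ih => exact h.ball_add_two ih

open Classical in
/-- The Bożejko–Picardello identity: at most one pair `(i, j)` contributes, because the heights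
determine `i - j`. -/
theorem ball_indicator (h : TreeLike G S L) (n : ℕ) (w w' : Γ) :
    (if w' * w⁻¹ ∈ letterBall G S n then (1 : ℂ) else 0) =
      ∑ p ∈ Finset.HasAntidiagonal.antidiagonal n, if ray L p.1 w = ray L p.2 w' then (1 : ℂ) else 0 := by
  by_cases hw : w' * w⁻¹ ∈ letterBall G S n
  · obtain ⟨i, j, hij, hr⟩ := h.exists_ray_eq n w w' hw
    rw [if_pos hw, Finset.sum_eq_single (i, j), if_pos hr]
    · rintro ⟨i', j'⟩ hp hne
      rw [Finset.HasAntidiagonal.mem_antidiagonal] at hp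
      refine if_neg fun hr' => hne ?_
      have e1 := congrArg Prod.snd hr
      have e2 := congrArg Prod.snd hr'
      simp only [ray] at e1 e2 hp
      simp only [Prod.mk.injEq]
      omega
    · intro hn
      exact absurd (Finset.HasAntidiagonal.mem_antidiagonal.2 hij) hn
  · rw [if_neg hw, Finset.sum_eq_zero]
    rintro ⟨i, j⟩ hp
    rw [Finset.HasAntidiagonal.mem_antidiagonal] at hp
    exact if_neg fun hr => hw (h.mem_ball_of_ray_eq n w w' i j hp hr)

end TreeLike

namespace TreeLike

variable {Γ α : Type} [Group Γ] {G : Subgroup Γ} {S : Set Γ} {L : Γ → List α}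

open Classical in
/-- A truncation to radius `N` of `g ↦ r ^ |g|`, where `|g|` is the displacement of the root by
`g`. The set `letterBall G S n` consists of the `g` with `|g| ≤ n` and `|g| ≡ n` modulo `2`, so `g`
contributes `r ^ |g| + r ^ (|g| + 2) + ⋯` to the sum; this accounts for the factor `1 - r ^ 2`. -/
def treeFun (G : Subgroup Γ) (S : Set Γ) (r : ℝ) (N : ℕ) (g : Γ) : ℝ :=
  (1 - r ^ 2) * ∑ n ∈ Finset.range (N + 1), r ^ n * if g ∈ letterBall G S n then 1 else 0

open Classical in
theorem treeFun_eq (h : TreeLike G S L) (r : ℝ) (N : ℕ) (w w' : Γ) :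
    ((treeFun G S r N (w' * w⁻¹) : ℝ) : ℂ) =
      ∑ p ∈ (Finset.range (N + 1) ×ˢ Finset.range (N + 1)).filter (fun p => p.1 + p.2 ≤ N),
        ((1 - r ^ 2) * r ^ (p.1 + p.2) : ℂ) *
          if ray L p.1 w = ray L p.2 w' then (1 : ℂ) else 0 := by
  have hmap : ∀ p ∈ (Finset.range (N + 1) ×ˢ Finset.range (N + 1)).filter
      (fun p => p.1 + p.2 ≤ N), p.1 + p.2 ∈ Finset.range (N + 1) := by
    intro p hp
    rw [Finset.mem_filter] at hp
    exact Finset.mem_range.2 (Nat.lt_succ_of_le hp.2)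
  rw [← Finset.sum_fiberwise_of_maps_to hmap, treeFun]
  push_cast
  rw [Finset.mul_sum]
  refine Finset.sum_congr rfl fun n hn => ?_
  have hfib : ((Finset.range (N + 1) ×ˢ Finset.range (N + 1)).filter
      (fun p => p.1 + p.2 ≤ N)).filter (fun p => p.1 + p.2 = n) =
      Finset.HasAntidiagonal.antidiagonal n := by
    ext ⟨i, j⟩
    simp only [Finset.mem_filter, Finset.mem_product, Finset.mem_range,
      Finset.HasAntidiagonal.mem_antidiagonal] at hn ⊢
    omega
  rw [hfib, apply_ite (Complex.ofReal), Complex.ofReal_one, Complex.ofReal_zero, h.ball_indicator,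
    Finset.mul_sum, Finset.mul_sum]
  refine Finset.sum_congr rfl fun p hp => ?_
  rw [Finset.HasAntidiagonal.mem_antidiagonal.1 hp, mul_assoc]

open Classical in
/-- Without truncation, `r ^ d(x, y) / (1 - r ^ 2)` is the Gram kernel of the vectors
`∑ i, r ^ i e(xᵢ)`, where `x₀, x₁, …` is the ray from `x`. The same vectors truncated at `i = N`
give the sum over the square `i, j ≤ N`, and their squared norms are at most `1 / (1 - r ^ 2)`. -/
theorem schurBdd_square (L : Γ → List α) {r : ℝ} (hr0 : 0 < r) (hr1 : r < 1) (N : ℕ) :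
    SchurBdd (fun s t => ∑ p ∈ Finset.range (N + 1) ×ˢ Finset.range (N + 1),
        ((1 - r ^ 2) * r ^ (p.1 + p.2) : ℂ) *
          if ray L p.1 t⁻¹ = ray L p.2 s⁻¹ then (1 : ℂ) else 0) 1 := by
  have hr2 : 0 < 1 - r ^ 2 := by nlinarith
  have key : SchurBdd (fun s t => ∑ p ∈ Finset.range (N + 1) ×ˢ Finset.range (N + 1),
        (r ^ (p.1 + p.2) : ℂ) *
          if ray L p.1 t⁻¹ = ray L p.2 s⁻¹ then (1 : ℂ) else 0) ((1 - r ^ 2)⁻¹) := by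
    obtain ⟨H, i1, i2, e, he⟩ := exists_pointMasses (List α × ℤ)
    have hi := orthonormal_iff_ite.1 he
    have hX : ∀ s t : Γ, ⟪∑ i ∈ Finset.range (N + 1), ((r : ℂ) ^ i) • e (ray L i t⁻¹),
        ∑ i ∈ Finset.range (N + 1), ((r : ℂ) ^ i) • e (ray L i s⁻¹)⟫_ℂ =
        ∑ p ∈ Finset.range (N + 1) ×ˢ Finset.range (N + 1), (r ^ (p.1 + p.2) : ℂ) *
          if ray L p.1 t⁻¹ = ray L p.2 s⁻¹ then (1 : ℂ) else 0 := by
      intro s t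
      rw [sum_inner, Finset.sum_product]
      refine Finset.sum_congr rfl fun i _ => ?_
      rw [inner_sum]
      refine Finset.sum_congr rfl fun j _ => ?_
      rw [inner_smul_left, inner_smul_right, hi, map_pow, Complex.conj_ofReal, pow_add, mul_assoc]
    have hN : ∀ t : Γ, ‖∑ i ∈ Finset.range (N + 1), ((r : ℂ) ^ i) • e (ray L i t⁻¹)‖ ^ 2 ≤
        (1 - r ^ 2)⁻¹ := by
      intro t
      have h1 : ((‖∑ i ∈ Finset.range (N + 1), ((r : ℂ) ^ i) • e (ray L i t⁻¹)‖ ^ 2 : ℝ) : ℂ) =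
          ((∑ i ∈ Finset.range (N + 1), (r ^ 2) ^ i : ℝ) : ℂ) := by
        push_cast
        have h0 := inner_self_eq_norm_sq_to_K (𝕜 := ℂ)
          (∑ i ∈ Finset.range (N + 1), ((r : ℂ) ^ i) • e (ray L i t⁻¹))
        rw [hX, Finset.sum_product] at h0
        refine h0.symm.trans ?_
        refine Finset.sum_congr rfl fun i hi => ?_
        rw [Finset.sum_eq_single i]
        · simp only [if_true, mul_one]
          ring
        · intro j _ hj
          rw [if_neg fun e => hj (ray_inj e).symm, mul_zero]
        · intro hn; exact absurd hi hn
      rw [Complex.ofReal_inj.1 h1, ← one_div, le_div_iff₀ hr2, geom_sum_mul_neg]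
      have : 0 ≤ (r ^ 2) ^ (N + 1) := by positivity
      linarith
    exact ⟨H, i1, i2, _, _, hN, hN, fun s t => (hX s t).symm⟩
  have := key.smul (1 - r ^ 2 : ℂ) hr2 (le_of_eq (by
    rw [show (1 - r ^ 2 : ℂ) = ((1 - r ^ 2 : ℝ) : ℂ) by push_cast; rfl, Complex.norm_real,
      Real.norm_of_nonneg hr2.le]))
  rw [mul_inv_cancel₀ hr2.ne'] at this
  refine this.congr fun s t => ?_
  rw [Finset.mul_sum]
  exact Finset.sum_congr rfl fun p _ => by rw [mul_assoc]

open Classical in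
theorem schurBdd_indicator (L : Γ → List α) (i j : ℕ) :
    SchurBdd (fun s t : Γ => if ray L i t⁻¹ = ray L j s⁻¹ then (1 : ℂ) else 0) 1 := by
  obtain ⟨H, i1, i2, e, he⟩ := exists_pointMasses (List α × ℤ)
  exact ⟨H, i1, i2, fun t => e (ray L i t⁻¹), fun s => e (ray L j s⁻¹), fun t => by simp [he.1],
    fun s => by simp [he.1], fun s t => (orthonormal_iff_ite.1 he _ _).symm⟩

/-- The truncation costs at most `(N + 1) ^ 2 * r ^ N`: it removes from the square
`i, j ≤ N` the terms with `N < i + j`. -/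
theorem schurBdd_treeFun (h : TreeLike G S L) {r : ℝ} (hr0 : 0 < r) (hr1 : r < 1) (N : ℕ) :
    SchurBdd (fun s t => ((treeFun G S r N (s⁻¹ * t) : ℝ) : ℂ)) (1 + (N + 1) ^ 2 * r ^ N) := by
  classical
  have hr2 : 0 < 1 - r ^ 2 := by nlinarith
  set R := Finset.range (N + 1) ×ˢ Finset.range (N + 1) with hR
  have htail := SchurBdd.sum (R.filter fun p => ¬ p.1 + p.2 ≤ N)
    (fun p (s t : Γ) => (-((1 - r ^ 2) * r ^ (p.1 + p.2)) : ℂ) *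
      if ray L p.1 t⁻¹ = ray L p.2 s⁻¹ then (1 : ℂ) else 0) (fun _ => r ^ N * 1) (by
    intro p hp
    refine (schurBdd_indicator L p.1 p.2).smul _ (by positivity) ?_
    rw [show (-((1 - r ^ 2) * r ^ (p.1 + p.2)) : ℂ) =
      ((-((1 - r ^ 2) * r ^ (p.1 + p.2)) : ℝ) : ℂ) by push_cast; rfl, Complex.norm_real, norm_neg,
      Real.norm_of_nonneg (by positivity)]
    have h1 : r ^ (p.1 + p.2) ≤ r ^ N :=
      pow_le_pow_of_le_one hr0.le hr1.le (not_le.1 (Finset.mem_filter.1 hp).2).le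
    have h2 : 0 < r ^ (p.1 + p.2) := by positivity
    have h3 : 0 < r ^ 2 := by positivity
    nlinarith)
  refine (((schurBdd_square L hr0 hr1 N).add htail).congr fun s t => ?_).mono ?_
  · have e := h.treeFun_eq r N t⁻¹ s⁻¹
    rw [inv_inv] at e
    rw [e, ← Finset.sum_filter_add_sum_filter_not R (fun p => p.1 + p.2 ≤ N)]
    simp only [neg_mul, Finset.sum_neg_distrib]
    ring
  · rw [Finset.sum_const, nsmul_eq_mul, mul_one]
    have hc : ((R.filter fun p => ¬ p.1 + p.2 ≤ N).card : ℝ) ≤ (N + 1) ^ 2 := by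
      have := Finset.card_filter_le R fun p => ¬ p.1 + p.2 ≤ N
      rw [hR, Finset.card_product, Finset.card_range, ← hR] at this
      rw [pow_two]
      exact_mod_cast this
    have : 0 < r ^ N := by positivity
    nlinarith

/-- If `g` lies in the ball of index `n`, it lies in those of index `n + 2 * k`, so the sum defining
`treeFun` contains a geometric series with sum close to `r ^ n`. -/
theorem le_treeFun (h : TreeLike G S L) {r : ℝ} (hr0 : 0 < r) (hr1 : r < 1) {n K N : ℕ} {g : Γ}
    (hg : g ∈ letterBall G S n) (hN : n + 2 * K ≤ N) :
    r ^ n * (1 - (r ^ 2) ^ K) ≤ treeFun G S r N g := by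
  classical
  have hr2 : 0 < 1 - r ^ 2 := by nlinarith
  have h1 : ∑ k ∈ Finset.range K, r ^ (n + 2 * k) ≤
      ∑ n ∈ Finset.range (N + 1), r ^ n * if g ∈ letterBall G S n then 1 else 0 := by
    have e : ∑ k ∈ Finset.range K, r ^ (n + 2 * k) =
        ∑ m ∈ (Finset.range K).image (fun k => n + 2 * k),
          r ^ m * if g ∈ letterBall G S m then 1 else 0 := by
      rw [Finset.sum_image (fun a _ b _ hab => by have : n + 2 * a = n + 2 * b := hab; omega)]
      exact Finset.sum_congr rfl fun k _ => by rw [if_pos (h.mem_ball_add_two_mul hg k), mul_one]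
    rw [e]
    refine Finset.sum_le_sum_of_subset_of_nonneg ?_ fun i _ _ => ?_
    · intro m hm
      simp only [Finset.mem_image, Finset.mem_range] at hm ⊢
      omega
    · split_ifs <;> positivity
  have h2 : (∑ k ∈ Finset.range K, r ^ (n + 2 * k)) = r ^ n * ∑ k ∈ Finset.range K, (r ^ 2) ^ k := by
    rw [Finset.mul_sum]
    exact Finset.sum_congr rfl fun k _ => by rw [pow_add, pow_mul]
  calc r ^ n * (1 - (r ^ 2) ^ K)
      = (1 - r ^ 2) * ∑ k ∈ Finset.range K, r ^ (n + 2 * k) := by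
        rw [h2, ← geom_sum_mul_neg]; ring
    _ ≤ _ := mul_le_mul_of_nonneg_left h1 hr2.le

theorem mem_ball_of_treeFun_ne_zero {r : ℝ} {N : ℕ} {g : Γ} (hg : treeFun G S r N g ≠ 0) :
    ∃ n ≤ N, g ∈ letterBall G S n := by
  by_contra! hn
  refine hg ?_
  rw [treeFun, Finset.sum_eq_zero, mul_zero]
  intro n hnN
  rw [if_neg (hn n (Nat.lt_succ_iff.1 (Finset.mem_range.1 hnN))), mul_zero]

open Filter Topology in
/-- The truncated functions approximate `1` with norms tending to `1`: take `r` close to `1`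
and then `N` large. -/
theorem exists_treeFun (h : TreeLike G S L) (F : Finset Γ) {δ : ℝ} (hδ : 0 < δ) :
    ∃ r N, SchurBdd (fun s t => ((treeFun G S r N (s⁻¹ * t) : ℝ) : ℂ)) (1 + δ) ∧
      ∀ g ∈ F, |treeFun G S r N g - 1| ≤ δ := by
  choose ℓ hℓ using h.exists_mem_ball
  have hr : ∀ᶠ r : ℝ in 𝓝[<] 1, (∀ g ∈ F, 1 - δ < r ^ ℓ g) ∧ 0 < r ∧ r < 1 := by
    refine Eventually.and ((eventually_all_finset F).2 fun g _ => ?_) (Eventually.and ?_ ?_)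
    · have : Tendsto (fun r : ℝ => r ^ ℓ g) (𝓝[<] 1) (𝓝 (1 ^ ℓ g)) :=
        ((continuous_pow (ℓ g)).tendsto 1).mono_left nhdsWithin_le_nhds
      exact this.eventually (lt_mem_nhds (by rw [one_pow]; linarith))
    · exact nhdsWithin_le_nhds (lt_mem_nhds one_pos)
    · exact self_mem_nhdsWithin
  obtain ⟨r, hrF, hr0, hr1⟩ := hr.exists
  have hN1 : ∀ᶠ N : ℕ in atTop, ((N : ℝ) + 1) ^ 2 * r ^ N < δ := by
    have h1 := tendsto_pow_const_mul_const_pow_of_lt_one 2 hr0.le hr1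
    have h2 := ((tendsto_add_atTop_iff_nat 1).2 h1).div_const r
    rw [zero_div] at h2
    filter_upwards [h2.eventually (gt_mem_nhds hδ)] with N hN
    rw [pow_succ r, ← mul_assoc, mul_div_cancel_right₀ _ hr0.ne'] at hN
    exact_mod_cast hN
  have hN2 : ∀ᶠ N : ℕ in atTop, ∀ g ∈ F, 1 - δ ≤ treeFun G S r N g := by
    refine (eventually_all_finset F).2 fun g hg => ?_
    have h1 : Tendsto (fun K : ℕ => r ^ ℓ g * (1 - (r ^ 2) ^ K)) atTop
        (𝓝 (r ^ ℓ g * (1 - 0))) :=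
      ((tendsto_pow_atTop_nhds_zero_of_lt_one (by positivity) (by nlinarith)).const_sub 1).const_mul _
    rw [sub_zero, mul_one] at h1
    obtain ⟨K, hK⟩ := (h1.eventually (lt_mem_nhds (hrF g hg))).exists
    filter_upwards [eventually_ge_atTop (ℓ g + 2 * K)] with N hN
    exact hK.le.trans (h.le_treeFun hr0 hr1 (hℓ g) hN)
  obtain ⟨N, hN1, hN2⟩ := (hN1.and hN2).exists
  have hS : SchurBdd (fun s t => ((treeFun G S r N (s⁻¹ * t) : ℝ) : ℂ)) (1 + δ) :=
    (h.schurBdd_treeFun hr0 hr1 N).mono (by linarith)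
  refine ⟨r, N, hS, fun g hg => abs_le.2 ⟨by linarith [hN2 g hg], ?_⟩⟩
  have := hS.norm_le 1 g
  rw [inv_one, one_mul, Complex.norm_real] at this
  linarith [Real.le_norm_self (treeFun G S r N g)]

/-- A group acting on a locally finite tree is weakly amenable with constant `1` as soon as
there are Herz–Schur multipliers of norm at most `1` that converge pointwise to `1` and whose
restrictions to the balls of the tree are finitely supported: multiply them by `treeFun`. -/
theorem weaklyAmenable (h : TreeLike G S L)
    (amen : ∀ (F : Finset Γ) (ε : ℝ), 0 < ε → ∃ ψ : Γ → ℂ,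
      SchurBdd (fun s t => ψ (s⁻¹ * t)) 1 ∧ (∀ s ∈ F, ‖ψ s - 1‖ ≤ ε) ∧
      ∀ n, {g | g ∈ letterBall G S n ∧ ψ g ≠ 0}.Finite) (C : ℝ) (hC : 1 < C) :
    WeaklyAmenableWithConst Γ C := by
  refine weaklyAmenable_of_schurBdd (by linarith) fun F ε hε => ?_
  obtain ⟨r, N, h1, h2⟩ := h.exists_treeFun F
    (δ := min (C - 1) (ε / 2)) (lt_min (by linarith) (by linarith))
  obtain ⟨ψ, h3, h4, h5⟩ := amen F (ε / 2) (by linarith)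
  refine ⟨fun g => ((treeFun G S r N g : ℝ) : ℂ) * ψ g, ?_, fun s hs => ?_, ?_⟩
  · refine Set.Finite.subset ((Set.finite_Iic N).biUnion fun n _ => h5 n) fun g hg => ?_
    rw [Function.mem_support, mul_ne_zero_iff] at hg
    obtain ⟨n, hn, hgn⟩ := mem_ball_of_treeFun_ne_zero (Complex.ofReal_ne_zero.1 hg.1)
    simp only [Set.mem_iUnion]
    exact ⟨n, hn, hgn, hg.2⟩
  · have e : ((treeFun G S r N s : ℝ) : ℂ) * ψ s - 1 =
        ((treeFun G S r N s - 1 : ℝ) : ℂ) * ψ s + (ψ s - 1) := by push_cast; ring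
    have hψ : ‖ψ s‖ ≤ 1 := by simpa using h3.norm_le 1 s
    have h6 := (h2 s hs).trans (min_le_right _ _)
    calc _ ≤ |treeFun G S r N s - 1| * ‖ψ s‖ + ‖ψ s - 1‖ := by
          rw [e, ← Real.norm_eq_abs, ← Complex.norm_real, ← norm_mul]
          exact norm_add_le _ _
      _ ≤ ε / 2 * 1 + ε / 2 := by
          gcongr
          exact h4 s hs
      _ = ε := by ring
  · refine (h1.mul h3 ?_).mono ?_
    · have : 0 < min (C - 1) (ε / 2) := lt_min (by linarith) (by linarith)
      linarith
    · linarith [min_le_left (C - 1) (ε / 2)]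

end TreeLike

/-! ### The trees of HNN extensions and of free groups -/

open HNNExtension in
/-- The Bass–Serre tree of an HNN extension whose associated subgroups `A`, `B` have finitely many
left cosets. The path from the vertex of `w` to the root is read off from the normal form of `w`,
whose head is irrelevant. -/
theorem treeLike_hnn {G : Type} [Group G] {A B : Subgroup G} {φ : A ≃* B}
    (hA : ∃ R : Set G, R.Finite ∧ ∀ g, ∃ r ∈ R, ∃ a ∈ A, g = r * a)
    (hB : ∃ R : Set G, R.Finite ∧ ∀ g, ∃ r ∈ R, ∃ b ∈ B, g = r * b) :
    ∃ (S : Set (HNNExtension G A B φ)) (L : HNNExtension G A B φ → List (ℤˣ × G)),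
      TreeLike (of : G →* HNNExtension G A B φ).range S L := by
  obtain ⟨d⟩ := NormalWord.TransversalPair.nonempty G A B
  have hL_of : ∀ (g : G) (w : HNNExtension G A B φ),
      ((of g * w) • (NormalWord.empty : NormalWord d)).toList =
        (w • (NormalWord.empty : NormalWord d)).toList := by
    intro g w
    rw [mul_smul, NormalWord.of_smul_eq_smul, NormalWord.group_smul_toList]
  refine ⟨{σ | ∃ (g g' : G) (u : ℤˣ), σ = of g * t ^ (u : ℤ) * of g'},
    fun w => (w • (NormalWord.empty : NormalWord d)).toList, ?_, ?_, ?_, ?_, ?_, ?_, ?_⟩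
  · exact ⟨_, 1, 1, 1, rfl⟩
  · rintro _ ⟨g, g', u, rfl⟩
    refine ⟨g'⁻¹, g⁻¹, -u, ?_⟩
    simp only [mul_inv_rev, map_inv, Units.val_neg, zpow_neg, mul_assoc]
  · rintro _ ⟨h, rfl⟩ _ ⟨g, g', u, rfl⟩
    exact ⟨h * g, g', u, by simp only [map_mul, mul_assoc]⟩
  · intro w w'
    constructor
    · intro e
      have hw : w = (w • (NormalWord.empty : NormalWord d)).prod φ := by simp
      have hw' : w' = (w' • (NormalWord.empty : NormalWord d)).prod φ := by simp
      generalize w • (NormalWord.empty : NormalWord d) = W at hw e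
      generalize w' • (NormalWord.empty : NormalWord d) = W' at hw' e
      refine ⟨W'.head * W.head⁻¹, ?_⟩
      rw [hw, hw', NormalWord.ReducedWord.prod, NormalWord.ReducedWord.prod, e, map_mul, map_inv]
      group
    · rintro ⟨g, hg⟩
      have : w' = of g * w := by rw [hg]; group
      rw [this]
      exact (hL_of g w).symm
  · rintro _ ⟨g, g', u, rfl⟩ w
    rw [mul_assoc, mul_assoc, hL_of, mul_smul, NormalWord.t_pow_smul_eq_unitsSMul, ← hL_of g' w]
    generalize (of g' * w) • (NormalWord.empty : NormalWord d) = W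
    by_cases hc : NormalWord.Cancels u W
    · right
      rw [NormalWord.unitsSMul, dif_pos hc]
      cases W using NormalWord.consRecOn with
      | ofGroup => simp [NormalWord.Cancels] at hc
      | cons g v w h1 h2 => exact ⟨(v, w.head), rfl⟩
    · left
      rw [NormalWord.unitsSMul, dif_neg hc]
      exact ⟨_, rfl⟩
  · intro w a l hw
    have hw' : w = (w • (NormalWord.empty : NormalWord d)).prod φ := by simp
    generalize w • (NormalWord.empty : NormalWord d) = W at hw hw'
    cases W using NormalWord.consRecOn with
    | ofGroup => simp at hw
    | cons g u W h1 h2 =>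
      refine ⟨t ^ ((-u : ℤˣ) : ℤ) * of g⁻¹, ⟨1, g⁻¹, -u, by simp⟩, ?_⟩
      rw [NormalWord.prod_cons] at hw'
      have : t ^ ((-u : ℤˣ) : ℤ) * of g⁻¹ * w = W.prod φ := by
        rw [hw']
        simp only [map_inv, Units.val_neg, zpow_neg]
        group
      rw [this, NormalWord.prod_smul_empty]
      simp only [NormalWord.cons_toList, List.cons.injEq] at hw
      exact hw.2
  · obtain ⟨RA, hRA, hA⟩ := hA
    obtain ⟨RB, hRB, hB⟩ := hB
    refine ⟨(fun r => of r * t ^ (((-1 : ℤˣ)) : ℤ)) '' RA ∪ (fun r => of r * t ^ (((1 : ℤˣ)) : ℤ)) '' RB,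
      (hRA.image _).union (hRB.image _), ?_⟩
    rintro _ ⟨g, g', u, rfl⟩
    rcases Int.units_eq_one_or u with rfl | rfl
    · obtain ⟨r, hr, b, hb, rfl⟩ := hB g
      refine ⟨_, Or.inr ⟨r, hr, rfl⟩, _, ⟨(φ.symm ⟨b, hb⟩ : G) * g', rfl⟩, ?_⟩
      have := of_mul_t (φ := φ) ⟨b, hb⟩
      simp only [map_mul, Units.val_one, zpow_one, mul_assoc] at this ⊢
      rw [← mul_assoc (of b), this, mul_assoc]
    · obtain ⟨r, hr, b, hb, rfl⟩ := hA g
      refine ⟨_, Or.inl ⟨r, hr, rfl⟩, _, ⟨(φ ⟨b, hb⟩ : G) * g', rfl⟩, ?_⟩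
      have := of_mul_inv_t (φ := φ) ⟨b, hb⟩
      simp only [map_mul, Units.val_neg, Units.val_one, zpow_neg, zpow_one, mul_assoc] at this ⊢
      rw [← mul_assoc (of b), this, mul_assoc]

/-- The Cayley tree of a free group of finite rank, with reduced words as paths to the root. -/
theorem treeLike_freeGroup {α : Type} [Finite α] [Nonempty α] [DecidableEq α] :
    TreeLike (⊥ : Subgroup (FreeGroup α)) (Set.range fun x : α × Bool => FreeGroup.mk [x])
      FreeGroup.toWord where
  nonempty := Set.range_nonempty _
  inv_mem := by
    rintro _ ⟨⟨x, b⟩, rfl⟩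
    exact ⟨(x, !b), by simp [FreeGroup.inv_mk, FreeGroup.invRev]⟩
  mul_mem := by
    rintro g hg σ hσ
    rw [Subgroup.mem_bot.1 hg, one_mul]
    exact hσ
  eq_iff w w' := by
    rw [FreeGroup.toWord_injective.eq_iff, Subgroup.mem_bot, mul_inv_eq_one, eq_comm]
  step := by
    rintro _ ⟨x, rfl⟩ w
    have e : (FreeGroup.mk [x] * w).toWord = FreeGroup.reduce (x :: w.toWord) := by
      conv_lhs => rw [← FreeGroup.mk_toWord (x := w), FreeGroup.mul_mk, FreeGroup.toWord_mk]
      rfl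
    rw [e, FreeGroup.reduce.cons, FreeGroup.reduce_toWord]
    rcases w.toWord with _ | ⟨y, l⟩
    · exact Or.inl ⟨x, rfl⟩
    · dsimp only
      split_ifs
      · exact Or.inr ⟨y, rfl⟩
      · exact Or.inl ⟨x, rfl⟩
  descend := by
    rintro w ⟨x, b⟩ l hw
    refine ⟨_, ⟨(x, !b), rfl⟩, ?_⟩
    have e : (FreeGroup.mk [(x, !b)] * w).toWord = FreeGroup.reduce ((x, !b) :: w.toWord) := by
      conv_lhs => rw [← FreeGroup.mk_toWord (x := w), FreeGroup.mul_mk, FreeGroup.toWord_mk]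
      rfl
    rw [e, FreeGroup.reduce.cons, FreeGroup.reduce_toWord, hw]
    simp
  finite := ⟨_, Set.finite_range _, fun σ hσ => ⟨σ, hσ, 1, one_mem _, by simp⟩⟩

/-- If the vertex stabilizers are finite, then balls of the tree are finite subsets of `Γ`, and the
constant function `1` serves as the multiplier `ψ` in `TreeLike.weaklyAmenable`. -/
theorem TreeLike.weaklyAmenable_of_finite {Γ α : Type} [Group Γ] {G : Subgroup Γ} {S : Set Γ}
    {L : Γ → List α} (h : TreeLike G S L) (hG : (G : Set Γ).Finite) (C : ℝ) (hC : 1 < C) :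
    WeaklyAmenableWithConst Γ C := by
  refine h.weaklyAmenable (fun F ε hε => ⟨fun _ => 1, SchurBdd.one, by simp [hε.le], fun n => ?_⟩)
    C hC
  obtain ⟨R, hR, hR'⟩ := h.ball_finite n
  refine (hR.image2 (· * ·) hG).subset ?_
  rintro g ⟨hg, -⟩
  obtain ⟨r, hr, k, hk, rfl⟩ := hR' g hg
  exact ⟨r, hr, k, hk, rfl⟩

/-! ### Følner sequences -/

section Folner

variable {Γ X : Type} [Group Γ]

open Classical in
/-- The number of points of `F` that `g` moves out of `F`. -/
def escape (π : Γ →* Equiv.Perm X) (F : Finset X) (g : Γ) : ℕ :=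
  (F.filter fun x => π g x ∉ F).card

open Classical in
/-- The proportion of points of `F` that `g` keeps in `F`. -/
def stay (π : Γ →* Equiv.Perm X) (F : Finset X) (g : Γ) : ℂ :=
  ((F.filter fun x => π g x ∈ F).card : ℂ) / F.card

theorem escape_mul (π : Γ →* Equiv.Perm X) (F : Finset X) (g h : Γ) :
    escape π F (g * h) ≤ escape π F g + escape π F h := by
  classical
  have : (F.filter fun x => π (g * h) x ∉ F) ⊆
      (F.filter fun x => π g x ∉ F).image (π h).symm ∪ F.filter fun x => π h x ∉ F := by
    intro x hx
    simp only [Finset.mem_filter, Finset.mem_union, Finset.mem_image, map_mul,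
      Equiv.Perm.mul_apply] at hx ⊢
    by_cases hh : π h x ∈ F
    · exact Or.inl ⟨π h x, ⟨hh, hx.2⟩, by simp⟩
    · exact Or.inr ⟨hx.1, hh⟩
  refine (Finset.card_le_card this).trans ((Finset.card_union_le _ _).trans ?_)
  exact Nat.add_le_add_right Finset.card_image_le _

open Classical in
theorem card_stay_add_escape (π : Γ →* Equiv.Perm X) (F : Finset X) (g : Γ) :
    (F.filter fun x => π g x ∈ F).card + escape π F g = F.card :=
  Finset.card_filter_add_card_filter_not _

theorem escape_inv (π : Γ →* Equiv.Perm X) (F : Finset X) (g : Γ) :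
    escape π F g⁻¹ = escape π F g := by
  classical
  have h1 := card_stay_add_escape π F g
  have h2 := card_stay_add_escape π F g⁻¹
  have : (F.filter fun x => π g x ∈ F).card = (F.filter fun x => π g⁻¹ x ∈ F).card := by
    refine Finset.card_bij (fun x _ => π g x) ?_ ?_ ?_
    · intro x hx
      simp only [Finset.mem_filter] at hx ⊢
      exact ⟨hx.2, by simpa using hx.1⟩
    · intro x _ y _ e
      exact (π g).injective e
    · intro y hy
      simp only [Finset.mem_filter] at hy
      exact ⟨π g⁻¹ y, by simpa using hy.symm, by simp⟩
  omega

/-- The elements of `Γ` that move only a proportion `O(1 / ν)` of the points of `F ν` out of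
`F ν`. -/
def almostInvariant (π : Γ →* Equiv.Perm X) (F : ℕ → Finset X) : Subgroup Γ where
  carrier := {g | ∃ c : ℕ, ∀ ν, (ν + 1) * escape π (F ν) g ≤ c * (F ν).card}
  one_mem' := ⟨0, fun ν => by simp [escape]⟩
  mul_mem' := by
    rintro x y ⟨c, hc⟩ ⟨d, hd⟩
    refine ⟨c + d, fun ν => (Nat.mul_le_mul_left _ (escape_mul _ _ _ _)).trans ?_⟩
    rw [Nat.mul_add, Nat.add_mul c d]
    exact add_le_add (hc ν) (hd ν)
  inv_mem' := by
    rintro x ⟨c, hc⟩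
    exact ⟨c, fun ν => by rw [escape_inv]; exact hc ν⟩

theorem norm_stay_sub_one (π : Γ →* Equiv.Perm X) {F : Finset X} (hF : F.Nonempty) (g : Γ) :
    ‖stay π F g - 1‖ = (escape π F g : ℝ) / F.card := by
  classical
  have h0 : (F.card : ℂ) ≠ 0 := by exact_mod_cast hF.card_pos.ne'
  have h1 : ((F.filter fun x => π g x ∈ F).card : ℂ) + escape π F g = F.card := by
    exact_mod_cast card_stay_add_escape π F g
  have : stay π F g - 1 = -((escape π F g : ℂ) / F.card) := by
    rw [stay, div_sub_one h0, ← neg_div, ← h1]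
    ring
  rw [this, norm_neg, norm_div, Complex.norm_natCast, Complex.norm_natCast]

/-- The function `stay π F` is the diagonal matrix coefficient of the normalized indicator vector
of `F` in the permutation representation. -/
theorem schurBdd_stay (π : Γ →* Equiv.Perm X) {F : Finset X} (hF : F.Nonempty) :
    SchurBdd (fun s t => stay π F (s⁻¹ * t)) 1 := by
  classical
  obtain ⟨H, i1, i2, e, he⟩ := exists_pointMasses X
  rw [orthonormal_iff_ite] at he
  have h0 : (F.card : ℂ) ≠ 0 := by exact_mod_cast hF.card_pos.ne'
  have h0' : (0 : ℝ) < F.card := by exact_mod_cast hF.card_pos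
  set c : ℂ := (((√(F.card : ℝ))⁻¹ : ℝ) : ℂ) with hc
  have hcc : c * c = (F.card : ℂ)⁻¹ := by
    rw [hc, ← Complex.ofReal_mul, ← mul_inv, Real.mul_self_sqrt h0'.le]
    simp
  have key : ∀ s t : Γ, ⟪c • ∑ x ∈ F, e (π t x), c • ∑ y ∈ F, e (π s y)⟫_ℂ
      = stay π F (s⁻¹ * t) := by
    intro s t
    rw [inner_smul_left, inner_smul_right, sum_inner, ← mul_assoc]
    have : (starRingEnd ℂ) c = c := Complex.conj_ofReal _
    rw [this, hcc, stay, div_eq_inv_mul, Finset.card_filter, Nat.cast_sum]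
    congr 1
    refine Finset.sum_congr rfl fun x _ => ?_
    rw [inner_sum]
    simp only [he]
    have : ∀ y, (π t x = π s y) ↔ π (s⁻¹ * t) x = y := by
      intro y
      rw [map_mul, map_inv, Equiv.Perm.mul_apply, Equiv.Perm.inv_eq_iff_eq]
    simp only [this, Finset.sum_ite_eq]
    push_cast
    rfl
  have hn : ∀ t, ‖c • ∑ x ∈ F, e (π t x)‖ ^ 2 ≤ 1 := by
    intro t
    have h1 := inner_self_eq_norm_sq (𝕜 := ℂ) (c • ∑ x ∈ F, e (π t x))
    rw [key, inv_mul_cancel, stay, Finset.filter_true_of_mem (fun x hx => by simpa using hx),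
      div_self h0] at h1
    rw [RCLike.one_re] at h1
    exact h1.ge
  exact ⟨H, i1, i2, _, _, hn, hn, fun s t => (key s t).symm⟩

/-- Suppose that `Γ` acts on a locally finite tree and on a set `X`, that the stabilizer `G` of a
vertex acts freely on `X`, and that there is a Følner sequence in `X`. The functions `stay`
along the Følner sequence meet a ball of the tree in a finite set, because `G` acts freely. -/
theorem TreeLike.weaklyAmenable_of_folner {α : Type} {G : Subgroup Γ} {S : Set Γ}
    {L : Γ → List α} (h : TreeLike G S L) (π : Γ →* Equiv.Perm X)
    (free : ∀ x, ∀ g ∈ G, ∀ g' ∈ G, π g x = π g' x → g = g')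
    (F : ℕ → Finset X) (hF : ∀ ν, (F ν).Nonempty)
    (folner : ∀ g, g ∈ almostInvariant π F)
    (C : ℝ) (hC : 1 < C) : WeaklyAmenableWithConst Γ C := by
  refine h.weaklyAmenable (fun T ε hε => ?_) C hC
  choose c hc using folner
  obtain ⟨ν, hν⟩ := exists_nat_gt ((T.sup c : ℕ) / ε)
  refine ⟨stay π (F ν), schurBdd_stay π (hF ν), fun s hs => ?_, fun n => ?_⟩
  · rw [norm_stay_sub_one π (hF ν)]
    have h0 : (0 : ℝ) < (F ν).card := by exact_mod_cast (hF ν).card_pos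
    have h1 : ((ν : ℝ) + 1) * escape π (F ν) s ≤ c s * (F ν).card := by exact_mod_cast hc s ν
    have h2 : (c s : ℝ) ≤ (T.sup c : ℕ) := by exact_mod_cast Finset.le_sup (f := c) hs
    rw [div_lt_iff₀ hε] at hν
    rw [div_le_iff₀ h0]
    have h3 : (0 : ℝ) < (ν : ℝ) + 1 := by positivity
    have h4 : ((ν : ℝ) + 1) * escape π (F ν) s ≤ ((ν : ℝ) + 1) * (ε * (F ν).card) := by
      refine h1.trans ?_
      rw [← mul_assoc]
      refine mul_le_mul_of_nonneg_right ?_ h0.le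
      nlinarith
    exact le_of_mul_le_mul_left h4 h3
  · obtain ⟨R, hR, hR'⟩ := h.ball_finite n
    refine Set.Finite.subset (hR.biUnion fun r _ => (F ν).finite_toSet.biUnion fun x _ =>
      (F ν).finite_toSet.biUnion fun y _ => Set.Subsingleton.finite
        (s := {g | ∃ k ∈ G, g = r * k ∧ π g x = y}) ?_) ?_
    · rintro _ ⟨k, hk, rfl, e⟩ _ ⟨k', hk', rfl, e'⟩
      rw [← e', map_mul, map_mul, Equiv.Perm.mul_apply, Equiv.Perm.mul_apply] at e
      rw [free x k hk k' hk' ((π r).injective e)]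
    · rintro g ⟨hg, hg'⟩
      classical
      obtain ⟨r, hr, k, hk, rfl⟩ := hR' g hg
      have : ((F ν).filter fun x => π (r * k) x ∈ F ν).Nonempty := by
        rw [Finset.nonempty_iff_ne_empty]
        intro e
        refine hg' ?_
        rw [stay, e]
        simp
      obtain ⟨x, hx⟩ := this
      rw [Finset.mem_filter] at hx
      simp only [Set.mem_iUnion]
      exact ⟨r, hr, x, hx.1, _, hx.2, k, hk, rfl, rfl⟩

end Folner

/-! ### An affine action of `BS(m, n)` -/

section Affine

open Multiplicative

/-- The action of `ℤ` on `ℚ × ℤ` translating by multiples of `q ^ k` on the level `k`. -/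
def shift (q : ℚ) : Multiplicative ℤ →* Equiv.Perm (ℚ × ℤ) where
  toFun j :=
    { toFun := fun p => (p.1 + toAdd j * q ^ p.2, p.2)
      invFun := fun p => (p.1 - toAdd j * q ^ p.2, p.2)
      left_inv := fun p => by simp
      right_inv := fun p => by simp }
  map_one' := by ext p <;> simp
  map_mul' i j := by
    ext p
    · simp
      ring
    · simp

/-- The permutation of `ℚ × ℤ` lowering the level by one. -/
def lower : Equiv.Perm (ℚ × ℤ) where
  toFun p := (p.1, p.2 - 1)
  invFun p := (p.1, p.2 + 1)
  left_inv p := by simp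
  right_inv p := by simp

theorem shift_apply (q : ℚ) (j : Multiplicative ℤ) (p : ℚ × ℤ) :
    shift q j p = (p.1 + toAdd j * q ^ p.2, p.2) := rfl

theorem lower_apply (p : ℚ × ℤ) : lower p = (p.1, p.2 - 1) := rfl

/-- With `q = n / m` one has `m * q ^ k = n * q ^ (k - 1)`. -/
theorem lower_mul_shift {m n : ℤ} (hm : m ≠ 0) (hn : n ≠ 0) (x : Multiplicative ℤ) :
    lower * shift (n / m) (x ^ m) = shift (n / m) (x ^ n) * lower := by
  have hm' : (m : ℚ) ≠ 0 := by exact_mod_cast hm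
  have hn' : (n : ℚ) ≠ 0 := by exact_mod_cast hn
  ext p
  · simp only [Equiv.Perm.mul_apply, shift_apply, lower_apply, toAdd_zpow, smul_eq_mul]
    rw [zpow_sub_one₀ (div_ne_zero hn' hm')]
    push_cast
    field_simp
  · rfl

/-- The points of the `ν`-th Følner set are those `(i / m ^ (ν + 1), k)` with `0 ≤ k ≤ ν` and
`0 ≤ i < (ν + 1) * (|m| + |n|) ^ (ν + 1)`; the length of the range of `i` is large compared
to the translation lengths `m ^ (ν + 1) * (n / m) ^ k`, which are integers. -/
def folnerEmb {m : ℤ} (hm : m ≠ 0) (ν : ℕ) : ℕ × ℕ ↪ ℚ × ℤ where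
  toFun p := ((p.1 : ℚ) / m ^ (ν + 1), (p.2 : ℤ))
  inj' := by
    rintro ⟨i, k⟩ ⟨i', k'⟩ e
    have hm' : (m : ℚ) ^ (ν + 1) ≠ 0 := pow_ne_zero _ (by exact_mod_cast hm)
    simp only [Prod.mk.injEq, div_left_inj' hm', Nat.cast_inj] at e
    rw [e.1, e.2]

theorem folnerEmb_apply {m : ℤ} (hm : m ≠ 0) (ν i k : ℕ) :
    folnerEmb hm ν (i, k) = ((i : ℚ) / m ^ (ν + 1), (k : ℤ)) := rfl

/-- The indices of the points of the `ν`-th Følner set. -/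
def folnerIdx (m n : ℤ) (ν : ℕ) : Finset (ℕ × ℕ) :=
  Finset.range ((ν + 1) * (m.natAbs + n.natAbs) ^ (ν + 1)) ×ˢ Finset.range (ν + 1)

theorem card_folnerIdx (m n : ℤ) (ν : ℕ) :
    (folnerIdx m n ν).card = (ν + 1) * (m.natAbs + n.natAbs) ^ (ν + 1) * (ν + 1) := by
  simp [folnerIdx]

theorem escape_le {Γ : Type} [Group Γ] {m : ℤ} (hm : m ≠ 0) {ν : ℕ} (π : Γ →* Equiv.Perm (ℚ × ℤ))
    (I B : Finset (ℕ × ℕ)) (g : Γ)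
    (hB : ∀ p ∈ I, p ∉ B → ∃ p' ∈ I, π g (folnerEmb hm ν p) = folnerEmb hm ν p') :
    escape π (I.map (folnerEmb hm ν)) g ≤ B.card := by
  classical
  rw [escape, ← Finset.card_map (folnerEmb hm ν) (s := B)]
  refine Finset.card_le_card fun x hx => ?_
  simp only [Finset.mem_filter, Finset.mem_map] at hx ⊢
  obtain ⟨⟨p, hp, rfl⟩, hx⟩ := hx
  by_contra hcon
  obtain ⟨p', hp', e⟩ := hB p hp fun hpB => hcon ⟨p, hpB, rfl⟩
  exact hx ⟨p', hp', e.symm⟩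

theorem folner_shift {Γ : Type} [Group Γ] {m : ℤ} (hm : m ≠ 0) (n : ℤ)
    (π : Γ →* Equiv.Perm (ℚ × ℤ)) (g : Γ) (hg : π g = shift (n / m) (ofAdd 1)) (ν : ℕ) :
    (ν + 1) * escape π ((folnerIdx m n ν).map (folnerEmb hm ν)) g ≤
      2 * ((folnerIdx m n ν).map (folnerEmb hm ν)).card := by
  set N := (m.natAbs + n.natAbs) ^ (ν + 1) with hN
  have h := escape_le hm (ν := ν) π (folnerIdx m n ν)
    ((Finset.range N ∪ Finset.Ico ((ν + 1) * N - N) ((ν + 1) * N)) ×ˢ Finset.range (ν + 1)) g ?_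
  · have h1 := Finset.card_union_le (Finset.range N) (Finset.Ico ((ν + 1) * N - N) ((ν + 1) * N))
    rw [Finset.card_product, Finset.card_range] at h
    rw [Finset.card_range, Nat.card_Ico] at h1
    rw [Finset.card_map, card_folnerIdx, ← hN]
    have h2 : (Finset.range N ∪ Finset.Ico ((ν + 1) * N - N) ((ν + 1) * N)).card ≤ 2 * N := by
      omega
    calc (ν + 1) * escape π ((folnerIdx m n ν).map (folnerEmb hm ν)) g
        ≤ (ν + 1) * (2 * N * (ν + 1)) :=
          Nat.mul_le_mul_left _ (h.trans (Nat.mul_le_mul_right _ h2))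
      _ = 2 * ((ν + 1) * N * (ν + 1)) := by ring
  · rintro ⟨i, k⟩ hp hB
    simp only [folnerIdx, ← hN, Finset.mem_product, Finset.mem_range, Finset.mem_union,
      Finset.mem_Ico] at hp hB
    obtain ⟨hi, hk⟩ := hp
    have hm' : (m : ℚ) ≠ 0 := by exact_mod_cast hm
    -- the translation length on the level `k`, in units of `1 / m ^ (ν + 1)`
    set z : ℤ := m ^ (ν + 1 - k) * n ^ k with hz
    have hzN : z.natAbs ≤ N := by
      rw [hz, Int.natAbs_mul, Int.natAbs_pow, Int.natAbs_pow, hN]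
      calc m.natAbs ^ (ν + 1 - k) * n.natAbs ^ k
          ≤ (m.natAbs + n.natAbs) ^ (ν + 1 - k) * (m.natAbs + n.natAbs) ^ k :=
            Nat.mul_le_mul (Nat.pow_le_pow_left (by omega) _) (Nat.pow_le_pow_left (by omega) _)
        _ = (m.natAbs + n.natAbs) ^ (ν + 1) := by rw [← pow_add]; congr 1; omega
    have h3 : N ≤ i ∧ i + N < (ν + 1) * N := by
      constructor
      · by_contra hlt
        exact hB ⟨Or.inl (by omega), hk⟩
      · by_contra hlt
        exact hB ⟨Or.inr ⟨by omega, hi⟩, hk⟩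
    refine ⟨((i + z).toNat, k), ?_, ?_⟩
    · simp only [folnerIdx, ← hN, Finset.mem_product, Finset.mem_range]
      refine ⟨?_, hk⟩
      generalize (ν + 1) * N = M at *
      omega
    · have h4 : (((i + z).toNat : ℕ) : ℚ) = i + z := by
        have : (((i + z).toNat : ℕ) : ℤ) = i + z := Int.toNat_of_nonneg (by omega)
        exact_mod_cast this
      rw [hg, shift_apply, folnerEmb_apply, folnerEmb_apply, h4, toAdd_ofAdd]
      simp only [Prod.mk.injEq, and_true, zpow_natCast]
      rw [hz, add_div]
      have h5 : (m : ℚ) ^ (ν + 1) = m ^ (ν + 1 - k) * m ^ k := by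
        rw [← pow_add]; congr 1; omega
      rw [h5, div_pow]
      push_cast
      field_simp

theorem folner_lower {Γ : Type} [Group Γ] {m : ℤ} (hm : m ≠ 0) (n : ℤ)
    (π : Γ →* Equiv.Perm (ℚ × ℤ)) (g : Γ) (hg : π g = lower) (ν : ℕ) :
    (ν + 1) * escape π ((folnerIdx m n ν).map (folnerEmb hm ν)) g ≤
      1 * ((folnerIdx m n ν).map (folnerEmb hm ν)).card := by
  have h := escape_le hm (ν := ν) π (folnerIdx m n ν)
    (Finset.range ((ν + 1) * (m.natAbs + n.natAbs) ^ (ν + 1)) ×ˢ {0}) g ?_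
  · rw [Finset.card_product, Finset.card_range, Finset.card_singleton, mul_one] at h
    rw [Finset.card_map, card_folnerIdx, one_mul, mul_comm (ν + 1)]
    exact Nat.mul_le_mul_right _ h
  · rintro ⟨i, k⟩ hp hB
    simp only [folnerIdx, Finset.mem_product, Finset.mem_range, Finset.mem_singleton] at hp hB
    have hk : k ≠ 0 := fun h0 => hB ⟨hp.1, h0⟩
    refine ⟨(i, k - 1), ?_, ?_⟩
    · simp only [folnerIdx, Finset.mem_product, Finset.mem_range]
      exact ⟨hp.1, by omega⟩
    · rw [hg, lower_apply, folnerEmb_apply, folnerEmb_apply]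
      simp only [Prod.mk.injEq, true_and]
      omega

end Affine

/-! ### The Baumslag–Solitar groups -/

section BaumslagSolitar

open Multiplicative HNNExtension

theorem exists_finite_reps {m : ℤ} (hm : m ≠ 0) : ∃ R : Set (Multiplicative ℤ), R.Finite ∧
    ∀ g, ∃ r ∈ R, ∃ a ∈ (zpowGroupHom m : Multiplicative ℤ →* Multiplicative ℤ).range,
      g = r * a := by
  refine ⟨(fun i : ℤ => ofAdd i) '' Set.Ico 0 |m|, (Set.finite_Ico _ _).image _, fun g => ?_⟩
  refine ⟨_, ⟨toAdd g % m, ⟨Int.emod_nonneg _ hm, Int.emod_lt_abs _ hm⟩, rfl⟩, _,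
    ⟨ofAdd (toAdd g / m), rfl⟩, ?_⟩
  apply toAdd.injective
  simp only [zpowGroupHom_apply, toAdd_mul, toAdd_zpow, toAdd_ofAdd, smul_eq_mul]
  rw [Int.emod_add_mul_ediv]

/-- HNN extensions of `ℤ` along nontrivial subgroups. -/
theorem weaklyAmenable_hnn_int {m n : ℤ} (hm : m ≠ 0) (hn : n ≠ 0)
    (φ : (zpowGroupHom m : Multiplicative ℤ →* Multiplicative ℤ).range ≃*
      (zpowGroupHom n : Multiplicative ℤ →* Multiplicative ℤ).range)
    (hφ : ∀ x, (φ ⟨x ^ m, x, rfl⟩ : Multiplicative ℤ) = x ^ n) (C : ℝ) (hC : 1 < C) :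
    WeaklyAmenableWithConst (HNNExtension (Multiplicative ℤ) _ _ φ) C := by
  obtain ⟨S, L, h⟩ := treeLike_hnn (φ := φ) (exists_finite_reps hm) (exists_finite_reps hn)
  have hq : (n / m : ℚ) ≠ 0 := div_ne_zero (by exact_mod_cast hn) (by exact_mod_cast hm)
  let π : HNNExtension (Multiplicative ℤ) _ _ φ →* Equiv.Perm (ℚ × ℤ) :=
    HNNExtension.lift (shift (n / m)) lower (by
      rintro ⟨_, x, rfl⟩
      have := lower_mul_shift hm hn x
      rw [← hφ x] at this
      exact this)
  have hπ : ∀ j, π (of j) = shift (n / m) j := fun j => lift_of _ _ _ _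
  have hπt : π t = lower := lift_t _ _ _
  refine h.weaklyAmenable_of_folner π ?_ (fun ν => (folnerIdx m n ν).map (folnerEmb hm ν)) ?_ ?_
    C hC
  · rintro x _ ⟨i, rfl⟩ _ ⟨j, rfl⟩ e
    rw [hπ, hπ, shift_apply, shift_apply, Prod.mk.injEq, add_right_inj,
      mul_left_inj' (zpow_ne_zero _ hq), Int.cast_inj] at e
    rw [toAdd.injective e.1]
  · intro ν
    rw [← Finset.card_pos, Finset.card_map, card_folnerIdx]
    have : 0 < m.natAbs + n.natAbs := by omega
    positivity
  · intro g
    induction g using HNNExtension.induction_on with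
    | of j =>
      have hj : of j = (of (ofAdd 1) : HNNExtension (Multiplicative ℤ) _ _ φ) ^ toAdd j := by
        rw [← map_zpow, ← ofAdd_zsmul, smul_eq_mul, mul_one, ofAdd_toAdd]
      rw [hj]
      refine zpow_mem ?_ _
      exact ⟨2, folner_shift hm n π _ (hπ _)⟩
    | t => exact ⟨1, folner_lower hm n π t hπt⟩
    | mul x y hx hy => exact mul_mem hx hy
    | inv x hx => exact inv_mem hx

/-- HNN extensions of finite groups. -/
theorem weaklyAmenable_hnn_finite {G : Type} [Group G] [Finite G] {A B : Subgroup G} {φ : A ≃* B}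
    (C : ℝ) (hC : 1 < C) : WeaklyAmenableWithConst (HNNExtension G A B φ) C := by
  obtain ⟨S, L, h⟩ := treeLike_hnn (φ := φ)
    ⟨Set.univ, Set.finite_univ, fun g => ⟨g, trivial, 1, one_mem _, (mul_one g).symm⟩⟩
    ⟨Set.univ, Set.finite_univ, fun g => ⟨g, trivial, 1, one_mem _, (mul_one g).symm⟩⟩
  refine h.weaklyAmenable_of_finite ?_ C hC
  rw [MonoidHom.coe_range]
  exact Set.finite_range _

namespace BaumslagSolitar

variable {m n : ℤ}

/-- The generator `a`. -/
def genA : BaumslagSolitar m n := PresentedGroup.of false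

/-- The stable letter `b`. -/
def genB : BaumslagSolitar m n := PresentedGroup.of true

theorem relation : (genB * genA ^ m : BaumslagSolitar m n) = genA ^ n * genB := by
  have h : (genB * genA ^ m * genB⁻¹ * genA ^ (-n) : BaumslagSolitar m n) = 1 :=
    PresentedGroup.one_of_mem (rels := {FreeGroup.of true * (FreeGroup.of false) ^ m *
      (FreeGroup.of true)⁻¹ * (FreeGroup.of false) ^ (-n)}) rfl
  rw [zpow_neg, mul_inv_eq_one, mul_inv_eq_iff_eq_mul] at h
  exact h

theorem exists_hom {H : Type} [Group H] (a b : H) (h : b * a ^ m = a ^ n * b) :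
    ∃ f : BaumslagSolitar m n →* H, f genA = a ∧ f genB = b := by
  refine ⟨PresentedGroup.toGroup (f := fun i : Bool => if i then b else a) ?_, ?_, ?_⟩
  · rintro _ rfl
    simp [h]
  · exact PresentedGroup.toGroup.of _
  · exact PresentedGroup.toGroup.of _

theorem hom_eq_id (f : BaumslagSolitar m n →* BaumslagSolitar m n) (ha : f genA = genA)
    (hb : f genB = genB) (x : BaumslagSolitar m n) : f x = x := by
  have : f = MonoidHom.id _ := by
    refine PresentedGroup.ext fun i => ?_
    cases i
    · exact ha
    · exact hb
  rw [this]
  rfl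

/-- A homomorphism `BS(m, n) → H` is injective if some homomorphism `H → BS(m, n)` maps the images
of the generators back to the generators. -/
theorem weaklyAmenable_of_retract {H : Type} [Group H] {C : ℝ} (hH : WeaklyAmenableWithConst H C)
    (a' b' : H) (h : b' * a' ^ m = a' ^ n * b') (g : H →* BaumslagSolitar m n) (ha : g a' = genA)
    (hb : g b' = genB) : WeaklyAmenableWithConst (BaumslagSolitar m n) C := by
  obtain ⟨f, hfa, hfb⟩ := exists_hom a' b' h
  refine hH.of_injective f (Function.LeftInverse.injective (g := g) fun x => ?_)
  exact hom_eq_id (g.comp f) (by simp [hfa, ha]) (by simp [hfb, hb]) x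

/-- If `k ≠ 0` divides `m` and `n` and `a ^ k = 1`, then `BS(m, n)` is the free product of `ℤ / k`
and `ℤ`, realized as an HNN extension of `ℤ / k` with trivial associated subgroups. This happens
when exactly one of `m`, `n` vanishes, with `k = |m| + |n|`. -/
theorem weaklyAmenable_of_torsion (k : ℕ) (hk : k ≠ 0) (hkm : (k : ℤ) ∣ m) (hkn : (k : ℤ) ∣ n)
    (ha : (genA ^ k : BaumslagSolitar m n) = 1) (C : ℝ) (hC : 1 < C) :
    WeaklyAmenableWithConst (BaumslagSolitar m n) C := by
  have : NeZero k := ⟨hk⟩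
  let z : Multiplicative (ZMod k) := ofAdd 1
  have hz : ∀ l : ℤ, (k : ℤ) ∣ l → z ^ l = 1 := by
    intro l hl
    rw [← ofAdd_zsmul, zsmul_one, (ZMod.intCast_zmod_eq_zero_iff_dvd l k).2 hl]
    rfl
  let g₀ : ZMod k →+ Additive (BaumslagSolitar m n) :=
    ZMod.lift k ⟨zmultiplesHom _ (Additive.ofMul genA), by
      rw [zmultiplesHom_apply, natCast_zsmul, ← ofMul_pow, ha]
      rfl⟩
  have hg₀ : g₀ 1 = Additive.ofMul genA := by
    have : g₀ ((1 : ℤ) : ZMod k) = Additive.ofMul genA := by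
      rw [ZMod.lift_coe]
      exact one_zsmul _
    rwa [Int.cast_one] at this
  refine weaklyAmenable_of_retract (weaklyAmenable_hnn_finite (G := Multiplicative (ZMod k))
    (φ := MulEquiv.refl (⊥ : Subgroup (Multiplicative (ZMod k)))) C hC) (of z) t ?_
    (HNNExtension.lift (AddMonoidHom.toMultiplicativeLeft g₀) genB ?_) ?_ ?_
  · rw [← map_zpow of z m, ← map_zpow of z n, hz m hkm, hz n hkn, map_one, mul_one, one_mul]
  · rintro ⟨x, hx⟩
    rw [Subgroup.mem_bot] at hx
    subst hx
    simp
  · rw [lift_of]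
    exact hg₀
  · exact lift_t _ _ _

theorem zpowGroupHom_injective {m : ℤ} (hm : m ≠ 0) :
    Function.Injective (zpowGroupHom m : Multiplicative ℤ →* Multiplicative ℤ) := by
  intro x y e
  have hxy := congrArg toAdd e
  simp only [zpowGroupHom_apply, toAdd_zpow, smul_eq_mul] at hxy
  exact toAdd.injective (mul_left_cancel₀ hm hxy)

/-- If `m` and `n` are nonzero, then `BS(m, n)` is an HNN extension of `ℤ`. -/
theorem weaklyAmenable_of_ne_zero (hm : m ≠ 0) (hn : n ≠ 0) (C : ℝ) (hC : 1 < C) :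
    WeaklyAmenableWithConst (BaumslagSolitar m n) C := by
  let φ := (MonoidHom.ofInjective (zpowGroupHom_injective hm)).symm.trans
    (MonoidHom.ofInjective (zpowGroupHom_injective hn))
  have hφ : ∀ x, (φ ⟨x ^ m, x, rfl⟩ : Multiplicative ℤ) = x ^ n := by
    intro x
    have : (MonoidHom.ofInjective (zpowGroupHom_injective hm)).symm ⟨x ^ m, x, rfl⟩ = x := by
      rw [MulEquiv.symm_apply_eq]
      rfl
    rw [MulEquiv.trans_apply, this]
    rfl
  refine weaklyAmenable_of_retract (weaklyAmenable_hnn_int hm hn φ hφ C hC) (of (ofAdd 1)) t ?_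
    (HNNExtension.lift (zpowersHom _ genA) genB ?_) ?_ ?_
  · have := t_mul_of (φ := φ) ⟨ofAdd 1 ^ m, ofAdd 1, rfl⟩
    rw [hφ, map_zpow, map_zpow] at this
    exact this
  · rintro ⟨_, x, rfl⟩
    have h1 : (φ ⟨zpowGroupHom m x, x, rfl⟩ : Multiplicative ℤ) = x ^ n := hφ x
    -- the powers of the defining relation: `b a ^ (m j) = a ^ (n j) b` for every `j`
    have h2 : SemiconjBy (genB : BaumslagSolitar m n) (genA ^ m) (genA ^ n) := relation
    have h3 := h2.zpow_right (toAdd x)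
    rw [← zpow_mul, ← zpow_mul] at h3
    rw [h1]
    simp only [zpowersHom_apply, zpowGroupHom_apply, toAdd_zpow, smul_eq_mul]
    exact h3
  · rw [lift_of, zpowersHom_apply, toAdd_ofAdd, zpow_one]
  · exact lift_t _ _ _

/-- `BS(0, 0)` is the free group on `a` and `b`. -/
theorem weaklyAmenable_zero_zero (C : ℝ) (hC : 1 < C) :
    WeaklyAmenableWithConst (BaumslagSolitar 0 0) C := by
  refine weaklyAmenable_of_retract (treeLike_freeGroup.weaklyAmenable_of_finite ?_ C hC)
    (FreeGroup.of false) (FreeGroup.of true) (by simp)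
    (FreeGroup.lift fun i : Bool => if i then genB else genA) ?_ ?_
  · rw [Subgroup.coe_bot]
    exact Set.finite_singleton 1
  · simp
  · simp

end BaumslagSolitar

end BaumslagSolitar

/-- **Cornulier–Valette.** Every Baumslag–Solitar group `BS(m, n)` is weakly amenable
with Cowling–Haagerup constant `1`. -/
theorem baumslagSolitar_weaklyAmenable (m n : ℤ) :
    ∀ C : ℝ, 1 < C → WeaklyAmenableWithConst (BaumslagSolitar m n) C := by
  intro C hC
  have hrel := BaumslagSolitar.relation (m := m) (n := n)
  rcases eq_or_ne m 0 with rfl | hm <;> rcases eq_or_ne n 0 with rfl | hn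
  · exact BaumslagSolitar.weaklyAmenable_zero_zero C hC
  · refine BaumslagSolitar.weaklyAmenable_of_torsion n.natAbs (Int.natAbs_ne_zero.2 hn)
      (dvd_zero _) (Int.natAbs_dvd.2 dvd_rfl) ?_ C hC
    rw [zpow_zero, mul_one, right_eq_mul] at hrel
    rwa [pow_natAbs_eq_one]
  · refine BaumslagSolitar.weaklyAmenable_of_torsion m.natAbs (Int.natAbs_ne_zero.2 hm)
      (Int.natAbs_dvd.2 dvd_rfl) (dvd_zero _) ?_ C hC
    rw [zpow_zero, one_mul, mul_eq_left] at hrel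
    rwa [pow_natAbs_eq_one]
  · exact BaumslagSolitar.weaklyAmenable_of_ne_zero hm hn C hC
end
end

section
/- Let Γ be a group generated by a finite symmetric subset S (with 1 ∉ S and S = S⁻¹), and let d be the associated word metric on Γ, i.e. the edge-path distance in the Cayley graph whose vertex set is Γ and in which x and y are adjacent iff x ≠ y and x⁻¹y ∈ S. Suppose this metric is Gromov hyperbolic: there is δ ≥ 0 such that for all x, y, z, w ∈ Γ one has ⟨x, y⟩_w ≥ min(⟨x, z⟩_w, ⟨z, y⟩_w) − δ, where ⟨x, y⟩_w = (d(x, w) + d(y, w) − d(x, y))/2 is the Gromov product. Then Γ is weakly amenable: there exists C ≥ 1 such that Γ is weakly amenable with constant at most C. -/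
/-!
Why the theorem holds. Let `d` be the word metric, `|x| = d x 1`, and let `D` be a natural number
bounding the hyperbolicity constant.

*Geometry.* The kernel `1[d x y ≤ n]` is a sum, over `k + l = n` and a parity `σ ∈ {0, 1}`, of
indicators `1[P x k ∩ Q σ y l ≠ ∅]`, where `P x k` and `Q σ y l` are finite sets of uniformly
bounded cardinality and `P x k`, `P x k'` are disjoint for `k ≠ k'`, and likewise for `Q`
(`exists_sets`). An element of `P x k` is a triple `(m, w, i)` in which `m = |x| - k` is a height
and `w` is a point near a geodesic from `x` to `1`, near height `m`, with `d x w ≤ k + i`;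
the triples of `Q σ y l` have `m = |y| - l - σ` and `d y w ≤ l - i`. A common triple forces
`d x y ≤ d x w + d y w ≤ k + l = n`. If conversely `d x y ≤ n`, then the equation
`2 * m + σ + n = |x| + |y|` determines `m` and `σ`, hence `k` and `l`, so exactly one indicator can
be nonzero, and hyperbolicity provides the required point `w` (`exists_level_point`). For
negative heights `w = 1` does. Hyperbolicity also bounds the cardinalities (`card_level_set`).

*Analysis.* By inclusion–exclusion, `1[A ∩ B ≠ ∅] = ∑ (-1) ^ (#ω + 1)`, the sum being over the
nonempty `ω ⊆ A ∩ B`. It is therefore an inner product of a vector depending on `A` and a vector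
depending on `B`, both supported on nonempty subsets, and disjoint sets yield orthogonal vectors.
Hence `(1 - r) * ∑ r ^ (k + l) * 1[P x k ∩ Q y l ≠ ∅]`, summed over all `k, l < N`, is
`(1 - r)` times an inner product of two orthogonal sums, and has Schur norm at most
`(1 - r) * ∑ r ^ (2 * k) * 2 ^ R ≤ 2 ^ R`. Removing the pairs with `k + l ≥ N` costs at most
`N ^ 2 * r ^ N * 2 ^ R`, which is at most `2 ^ R` for large `N` (`schurBound_hankel`).

Combining the two, `φ g = (1 - r) * ∑ n < N, r ^ n * 1[|g| ≤ n]` has Herz–Schur norm bounded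
independently of `r` and `N`. It is supported in the ball of radius `N`, on which it equals
`r ^ |g| - r ^ N`, so it tends to `1` pointwise as `r → 1` and `N → ∞` suitably.
-/

open scoped InnerProductSpace

noncomputable section

/-! ### Hyperbolic geometry -/

/-- Existence of the common point `w` at height about `m`. Take `z` on a geodesic from `x` to `y`
with `d x z` about `(d x o + d x y - d y o) / 2`; by thinness of the triangle `o, x, y`, its height
is at most about `(d x o + d y o - d x y) / 2`. Then `w` lies `(n - d x y) / 2`
further along a geodesic from `z` to `o`, or is `o` itself if that geodesic is too short. -/
theorem exists_level_point {X : Type*} (d : X → X → ℕ) (o : X)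
    (hsym : ∀ x y, d x y = d y x)
    (htri : ∀ x y z, d x z ≤ d x y + d y z)
    (hgeo : ∀ x y a, a ≤ d x y → ∃ z, d x z = a ∧ d z y = d x y - a)
    (D : ℕ)
    (hyp : ∀ w x y z, min ((d x w : ℤ) + d z w - d x z) (d z w + d y w - d z y) - 2 * D
      ≤ d x w + d y w - d x y)
    (x y : X) (n m σ : ℕ) (hσ : σ ≤ 1) (hm : 2 * m + σ + n = d x o + d y o) (hn : d x y ≤ n) :
    ∃ w, d x w + d y w ≤ n ∧ d w o ≤ m + 2 * D + 2 ∧ d x w + m ≤ d x o := by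
  have h1 := htri x y o
  have h2 := htri y x o
  have h3 := hsym x y
  obtain ⟨z, hz1, hz2⟩ := hgeo x y ((d x o + d x y - d y o) / 2) (by omega)
  have h4 := hyp z x y o
  rw [hsym y z, hsym o z, hsym o y] at h4
  obtain ⟨w, hw1, hw2⟩ := hgeo z o (min ((n - d x y) / 2) (d z o)) (min_le_right _ _)
  have h5 := htri x z w
  have h6 := htri y z w
  have h7 := hsym y z
  refine ⟨w, ?_, ?_, ?_⟩ <;> omega

/-- For `m ≥ 0`, the points `w` near height `m` which lie near a geodesic from `x` to `o` form a set
of uniformly bounded diameter, since their Gromov products with `x` are all about `m`. For `m < 0`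
they lie in a fixed ball around `o`. -/
theorem card_level_set {X : Type*} (d : X → X → ℕ) (o : X)
    (hsym : ∀ x y, d x y = d y x)
    (htri : ∀ x y z, d x z ≤ d x y + d y z)
    (hball : ∀ R : ℕ, ∃ B : ℕ, ∀ x, ∃ s : Finset X, s.card ≤ B ∧ ∀ w, d x w ≤ R → w ∈ s)
    (D : ℕ)
    (hyp : ∀ w x y z, min ((d x w : ℤ) + d z w - d x z) (d z w + d y w - d z y) - 2 * D
      ≤ d x w + d y w - d x y) (c : ℕ) :
    ∃ B : ℕ, ∀ x (m : ℤ), ∃ s : Finset X, s.card ≤ B ∧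
      ∀ w, (d w o : ℤ) ≤ max m 0 + c → (d x w : ℤ) ≤ d x o - m + c → w ∈ s := by
  obtain ⟨B, hB⟩ := hball (4 * c + 2 * D)
  refine ⟨B, fun x m => ?_⟩
  rcases lt_or_ge m 0 with hm | hm
  · obtain ⟨s, hs, hs'⟩ := hB o
    refine ⟨s, hs, fun w hw _ => hs' w ?_⟩
    have := hsym w o
    omega
  · by_cases h : ∃ w, (d w o : ℤ) ≤ max m 0 + c ∧ (d x w : ℤ) ≤ d x o - m + c
    · obtain ⟨v, hv1, hv2⟩ := h
      obtain ⟨s, hs, hs'⟩ := hB v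
      refine ⟨s, hs, fun w hw1 hw2 => hs' w ?_⟩
      have h1 := hyp o v w x
      have h2 := htri x w o
      have h3 := htri x v o
      have h4 := hsym x v
      omega
    · exact ⟨∅, by simp, fun w h1 h2 => (h ⟨w, h1, h2⟩).elim⟩

/-- Decomposition of the kernels `1[d x y ≤ n]` into indicators of intersections of uniformly
bounded finite sets, encoded as sets of natural numbers. The parity `σ` is needed because
`d x o + d y o - n` may be odd. -/
theorem exists_sets {Γ : Type*} [Countable Γ] (d : Γ → Γ → ℕ) (o : Γ)
    (hsym : ∀ x y, d x y = d y x)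
    (hself : ∀ x, d x x = 0)
    (htri : ∀ x y z, d x z ≤ d x y + d y z)
    (hgeo : ∀ x y a, a ≤ d x y → ∃ z, d x z = a ∧ d z y = d x y - a)
    (hball : ∀ R : ℕ, ∃ B : ℕ, ∀ x, ∃ s : Finset Γ, s.card ≤ B ∧ ∀ w, d x w ≤ R → w ∈ s)
    (D : ℕ)
    (hyp : ∀ w x y z, min ((d x w : ℤ) + d z w - d x z) (d z w + d y w - d z y) - 2 * D
      ≤ d x w + d y w - d x y) :
    ∃ (R : ℕ) (P : Γ → ℕ → Finset ℕ) (Q : ℕ → Γ → ℕ → Finset ℕ),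
      (∀ x k, (P x k).card ≤ R) ∧ (∀ σ y l, (Q σ y l).card ≤ R) ∧
      (∀ x k k', k ≠ k' → Disjoint (P x k) (P x k')) ∧
      (∀ σ y l l', l ≠ l' → Disjoint (Q σ y l) (Q σ y l')) ∧
      ∀ x y (n : ℕ), ∑ σ ∈ Finset.range 2, ∑ p ∈ Finset.HasAntidiagonal.antidiagonal (n : ℕ),
        (if (P x p.1 ∩ Q σ y p.2).Nonempty then (1 : ℂ) else 0) =
          if d x y ≤ n then 1 else 0 := by
  classical
  set c : ℕ := 2 * D + 2 with hc
  obtain ⟨B, hB⟩ := card_level_set d o hsym htri hball D hyp c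
  choose W hWc hW using hB
  obtain ⟨e, he⟩ := Countable.exists_injective_nat (ℤ × Γ × ℤ)
  let I : Finset ℤ := Finset.Icc (-c : ℤ) c
  -- `m = |x| - k`: the height lies in the triple, so different `k` give disjoint sets.
  let P : Γ → ℕ → Finset (ℤ × Γ × ℤ) := fun x k =>
    (({(d x o : ℤ) - k} : Finset ℤ) ×ˢ (W x (d x o - k) ×ˢ I)).filter fun p =>
      (d p.2.1 o : ℤ) ≤ max p.1 0 + c ∧ (d x p.2.1 : ℤ) ≤ k + p.2.2
  let Q : ℕ → Γ → ℕ → Finset (ℤ × Γ × ℤ) := fun σ y l =>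
    (({(d y o : ℤ) - l - σ} : Finset ℤ) ×ˢ (W y (d y o - l - σ) ×ˢ I)).filter fun p =>
      (d p.2.1 o : ℤ) ≤ max p.1 0 + c ∧ (d y p.2.1 : ℤ) ≤ l - p.2.2
  have memP : ∀ x k m w i, (m, w, i) ∈ P x k ↔ m = (d x o : ℤ) - k ∧ (-c ≤ i ∧ i ≤ c) ∧
      (d w o : ℤ) ≤ max m 0 + c ∧ (d x w : ℤ) ≤ k + i := by
    intro x k m w i
    simp only [P, I, Finset.mem_filter, Finset.mem_product, Finset.mem_singleton, Finset.mem_Icc]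
    constructor
    · tauto
    · rintro ⟨rfl, h1, h2, h3⟩
      exact ⟨⟨rfl, hW _ _ _ h2 (by omega), h1⟩, h2, h3⟩
  have memQ : ∀ σ y l m w i, (m, w, i) ∈ Q σ y l ↔ m = (d y o : ℤ) - l - σ ∧
      (-c ≤ i ∧ i ≤ c) ∧ (d w o : ℤ) ≤ max m 0 + c ∧ (d y w : ℤ) ≤ l - i := by
    intro σ y l m w i
    simp only [Q, I, Finset.mem_filter, Finset.mem_product, Finset.mem_singleton, Finset.mem_Icc]
    constructor
    · tauto
    · rintro ⟨rfl, h1, h2, h3⟩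
      exact ⟨⟨rfl, hW _ _ _ h2 (by omega), h1⟩, h2, h3⟩
  have hinter : ∀ σ x y k l, (((P x k).image e) ∩ ((Q σ y l).image e)).Nonempty ↔
      ∃ m w i, (m, w, i) ∈ P x k ∧ (m, w, i) ∈ Q σ y l := by
    intro σ x y k l
    rw [← Finset.image_inter _ _ he, Finset.image_nonempty]
    constructor
    · rintro ⟨⟨m, w, i⟩, h⟩
      exact ⟨m, w, i, by simpa using h⟩
    · rintro ⟨m, w, i, h1, h2⟩
      exact ⟨(m, w, i), by simp [h1, h2]⟩
  refine ⟨B * I.card, fun x k => (P x k).image e, fun σ y l => (Q σ y l).image e,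
    ?_, ?_, ?_, ?_, ?_⟩
  · intro x k
    refine Finset.card_image_le.trans ((Finset.card_filter_le _ _).trans ?_)
    simp only [Finset.card_product, Finset.card_singleton, one_mul]
    exact Nat.mul_le_mul_right _ (hWc _ _)
  · intro σ y l
    refine Finset.card_image_le.trans ((Finset.card_filter_le _ _).trans ?_)
    simp only [Finset.card_product, Finset.card_singleton, one_mul]
    exact Nat.mul_le_mul_right _ (hWc _ _)
  · intro x k k' hk
    rw [Finset.disjoint_image he, Finset.disjoint_left]
    rintro ⟨m, w, i⟩ h1 h2
    rw [memP] at h1 h2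
    omega
  · intro σ y l l' hl
    rw [Finset.disjoint_image he, Finset.disjoint_left]
    rintro ⟨m, w, i⟩ h1 h2
    rw [memQ] at h1 h2
    omega
  · intro x y n
    rw [← Finset.sum_product']
    simp only [hinter]
    have t1 := htri x y o
    have t2 := htri y x o
    have t3 := hsym x y
    split_ifs with hn
    · -- The height and the parity are determined by `2 * m + σ + n = |x| + |y|`.
      obtain ⟨m, σ, hσ, hm⟩ : ∃ (m : ℤ) (σ : ℕ), σ ≤ 1 ∧
          2 * m + σ + n = (d x o : ℤ) + d y o := by
        refine ⟨((d x o : ℤ) + d y o - n) / 2, (((d x o : ℤ) + d y o - n) % 2).toNat, ?_, ?_⟩ <;>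
        omega
      obtain ⟨k, hk⟩ : ∃ k : ℕ, (k : ℤ) = d x o - m := ⟨(d x o - m).toNat, by omega⟩
      obtain ⟨l, hl⟩ : ∃ l : ℕ, (l : ℤ) = d y o - m - σ := ⟨(d y o - m - σ).toNat, by omega⟩
      rw [Finset.sum_eq_single (σ, (k, l))]
      · rw [if_pos]
        dsimp only
        rcases lt_or_ge m 0 with hm0 | hm0
        -- Below height zero one has `k ≥ |x|` and `l ≥ |y|`, so `w = o` is good.
        · refine ⟨m, o, 0, ?_, ?_⟩
          · rw [memP, hself]; omega
          · rw [memQ, hself]; omega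
        · lift m to ℕ using hm0
          obtain ⟨w, hw1, hw2, hw3⟩ := exists_level_point d o hsym htri hgeo D hyp x y n m σ hσ
            (by omega) hn
          have t4 := htri x w o
          -- With `i = d x w - k`, the bound `d x w + d y w ≤ k + l` becomes `d y w ≤ l - i`.
          refine ⟨m, w, d x w - k, ?_, ?_⟩
          · rw [memP]; omega
          · rw [memQ]; omega
      · rintro ⟨σ', k', l'⟩ h1 h2
        simp only [Finset.mem_product, Finset.mem_range, Finset.HasAntidiagonal.mem_antidiagonal] at h1
        rw [if_neg]
        rintro ⟨m', w, i, h3, h4⟩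
        rw [memP] at h3
        rw [memQ] at h4
        apply h2
        simp only [Prod.mk.injEq]
        dsimp only at h3 h4
        omega
      · intro h
        exfalso
        apply h
        simp only [Finset.mem_product, Finset.mem_range, Finset.HasAntidiagonal.mem_antidiagonal]
        omega
    · refine Finset.sum_eq_zero ?_
      rintro ⟨σ', k', l'⟩ h1
      simp only [Finset.mem_product, Finset.mem_range, Finset.HasAntidiagonal.mem_antidiagonal] at h1
      rw [if_neg]
      rintro ⟨m', w, i, h3, h4⟩
      rw [memP] at h3
      rw [memQ] at h4
      have := htri x w y
      have := hsym y w
      dsimp only at h3 h4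
      omega

/-! ### Schur multipliers -/

/-- The kernel `K` is a Schur multiplier of norm at most `C`. Both families of vectors are
normalized to have squared norm at most `C`, so that direct sums add the bounds; the Hilbert space
lives in `Type`, as in `WeaklyAmenableWithConst`. -/
def SchurBound {Γ : Type*} (K : Γ → Γ → ℂ) (C : ℝ) : Prop :=
  ∃ (H : Type) (_ : NormedAddCommGroup H) (_ : InnerProductSpace ℂ H) (_ : CompleteSpace H)
    (ξ η : Γ → H), (∀ t, ‖ξ t‖ ^ 2 ≤ C) ∧ (∀ s, ‖η s‖ ^ 2 ≤ C) ∧ ∀ s t, K s t = ⟪ξ t, η s⟫_ℂ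

namespace SchurBound

variable {Γ : Type*}

theorem zero : SchurBound (fun _ _ : Γ => (0 : ℂ)) 0 :=
  ⟨ℂ, inferInstance, inferInstance, inferInstance, fun _ => 0, fun _ => 0, by simp, by simp,
    by simp⟩

theorem add {K L : Γ → Γ → ℂ} {C D : ℝ} (hK : SchurBound K C) (hL : SchurBound L D) :
    SchurBound (fun s t => K s t + L s t) (C + D) := by
  obtain ⟨H, _, _, _, ξ, η, h1, h2, h3⟩ := hK
  obtain ⟨H', _, _, _, ξ', η', h1', h2', h3'⟩ := hL
  refine ⟨WithLp 2 (H × H'), inferInstance, inferInstance, inferInstance,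
    fun t => WithLp.toLp 2 (ξ t, ξ' t), fun s => WithLp.toLp 2 (η s, η' s), fun t => ?_,
    fun s => ?_, fun s t => ?_⟩
  · rw [WithLp.prod_norm_sq_eq_of_L2]
    exact add_le_add (h1 t) (h1' t)
  · rw [WithLp.prod_norm_sq_eq_of_L2]
    exact add_le_add (h2 s) (h2' s)
  · simp only [WithLp.prod_inner_apply, h3, h3']

theorem sum {ι : Type*} (s : Finset ι) {K : ι → Γ → Γ → ℂ} {C : ι → ℝ}
    (h : ∀ i ∈ s, SchurBound (K i) (C i)) :
    SchurBound (fun x y => ∑ i ∈ s, K i x y) (∑ i ∈ s, C i) := by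
  classical
  induction s using Finset.induction_on with
  | empty => simpa using zero
  | insert a s ha ih =>
    simp only [Finset.sum_insert ha]
    exact (h a (by simp)).add (ih fun i hi => h i (by simp [hi]))

theorem mono {K : Γ → Γ → ℂ} {C D : ℝ} (hK : SchurBound K C) (h : C ≤ D) : SchurBound K D := by
  obtain ⟨H, i1, i2, i3, ξ, η, h1, h2, h3⟩ := hK
  exact ⟨H, i1, i2, i3, ξ, η, fun t => (h1 t).trans h, fun s => (h2 s).trans h, h3⟩

theorem smul {K : Γ → Γ → ℂ} {C : ℝ} (hK : SchurBound K C) {a : ℝ} (ha : 0 ≤ a) :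
    SchurBound (fun s t => (a : ℂ) * K s t) (a * C) := by
  obtain ⟨H, i1, i2, i3, ξ, η, h1, h2, h3⟩ := hK
  have hn : ‖((√a : ℝ) : ℂ)‖ ^ 2 = a := by
    rw [Complex.norm_real, Real.norm_eq_abs, sq_abs, Real.sq_sqrt ha]
  refine ⟨H, i1, i2, i3, fun t => ((√a : ℝ) : ℂ) • ξ t, fun s => ((√a : ℝ) : ℂ) • η s,
    fun t => ?_, fun s => ?_, fun s t => ?_⟩
  · rw [norm_smul, mul_pow, hn]
    exact mul_le_mul_of_nonneg_left (h1 t) ha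
  · rw [norm_smul, mul_pow, hn]
    exact mul_le_mul_of_nonneg_left (h2 s) ha
  · simp only [h3]
    rw [inner_smul_left, inner_smul_right, Complex.conj_ofReal, ← mul_assoc,
      ← Complex.ofReal_mul, Real.mul_self_sqrt ha]

theorem neg {K : Γ → Γ → ℂ} {C : ℝ} (hK : SchurBound K C) :
    SchurBound (fun s t => -K s t) C := by
  obtain ⟨H, i1, i2, i3, ξ, η, h1, h2, h3⟩ := hK
  exact ⟨H, i1, i2, i3, ξ, fun s => -η s, h1, fun s => by simpa using h2 s,
    fun s t => by simp only [inner_neg_right, h3]⟩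

end SchurBound

/-- The vector `∑ f ω • b ω` over the nonempty subsets `ω` of `A`. Excluding the empty set makes
the vectors of disjoint sets orthogonal. -/
def subsetVec {E : Type*} [AddCommGroup E] [Module ℂ E] (b : Finset ℕ → E)
    (f : Finset ℕ → ℂ) (A : Finset ℕ) : E :=
  ∑ ω ∈ A.powerset.erase ∅, f ω • b ω

section subsetVec

variable {E : Type*} [NormedAddCommGroup E] [InnerProductSpace ℂ E] {b : Finset ℕ → E}

theorem inner_subsetVec (hb : Orthonormal ℂ b) (f g : Finset ℕ → ℂ) (A B : Finset ℕ) :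
    ⟪subsetVec b f A, subsetVec b g B⟫_ℂ =
      ∑ ω ∈ (A ∩ B).powerset.erase ∅, (starRingEnd ℂ) (f ω) * g ω := by
  classical
  have hset : (A ∩ B).powerset.erase ∅ =
      (A.powerset.erase ∅).filter (· ∈ B.powerset.erase ∅) := by
    ext ω
    simp only [Finset.mem_erase, Finset.mem_powerset, Finset.mem_filter, Finset.subset_inter_iff]
    tauto
  rw [hset, Finset.sum_filter, subsetVec, subsetVec, sum_inner]
  refine Finset.sum_congr rfl fun ω _ => ?_
  simp only [inner_sum, inner_smul_left, inner_smul_right, orthonormal_iff_ite.mp hb, mul_ite,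
    mul_one, mul_zero, Finset.sum_ite_eq]
  split_ifs <;> ring

theorem inner_subsetVec_disjoint (hb : Orthonormal ℂ b) (f g : Finset ℕ → ℂ) {A B : Finset ℕ}
    (h : Disjoint A B) : ⟪subsetVec b f A, subsetVec b g B⟫_ℂ = 0 := by
  rw [inner_subsetVec hb, Finset.disjoint_iff_inter_eq_empty.mp h]
  simp

theorem norm_sq_subsetVec_le (hb : Orthonormal ℂ b) (f : Finset ℕ → ℂ) (hf : ∀ ω, ‖f ω‖ = 1)
    {A : Finset ℕ} {R : ℕ} (hA : A.card ≤ R) : ‖subsetVec b f A‖ ^ 2 ≤ 2 ^ R := by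
  have h := inner_subsetVec hb f f A A
  rw [inner_self_eq_norm_sq_to_K, Finset.inter_self] at h
  simp only [← Complex.normSq_eq_conj_mul_self, Complex.normSq_eq_norm_sq, hf, one_pow,
    Complex.ofReal_one, Finset.sum_const, nsmul_eq_mul, mul_one] at h
  have h' : ‖subsetVec b f A‖ ^ 2 = ((A.powerset.erase ∅).card : ℝ) := by
    apply Complex.ofReal_injective
    push_cast
    exact h
  rw [h']
  have h2 : (A.powerset.erase ∅).card ≤ 2 ^ R :=
    (Finset.card_erase_le.trans (Finset.card_powerset A).le).trans
      (Nat.pow_le_pow_right (by norm_num) hA)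
  exact_mod_cast h2

/-- Inclusion–exclusion: the alternating sum over the nonempty subsets of `A ∩ B` detects whether
`A ∩ B` is nonempty. -/
theorem inner_subsetVec_sign (hb : Orthonormal ℂ b) (A B : Finset ℕ) :
    ⟪subsetVec b (fun _ => 1) A, subsetVec b (fun ω => (-1) ^ (ω.card + 1)) B⟫_ℂ =
      if (A ∩ B).Nonempty then 1 else 0 := by
  rw [inner_subsetVec hb]
  simp only [map_one, one_mul]
  have h := Finset.sum_powerset_neg_one_pow_card (x := A ∩ B)
  have h2 : ∑ ω ∈ (A ∩ B).powerset, (-1 : ℂ) ^ ω.card = if A ∩ B = ∅ then 1 else 0 := by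
    exact_mod_cast congrArg (Int.cast : ℤ → ℂ) h
  rw [← Finset.add_sum_erase _ _ (Finset.empty_mem_powerset _)] at h2
  simp only [pow_succ, mul_neg, mul_one, Finset.sum_neg_distrib, Finset.nonempty_iff_ne_empty]
  simp only [Finset.card_empty, pow_zero] at h2
  split_ifs at h2 ⊢ <;> first | linear_combination -h2 | simp_all

theorem norm_sq_geom_sum_le {v : ℕ → E} (hv : ∀ k k', k ≠ k' → ⟪v k, v k'⟫_ℂ = 0) {C : ℝ}
    (hC : ∀ k, ‖v k‖ ^ 2 ≤ C) {r : ℝ} (hr0 : 0 ≤ r) (hr1 : r < 1) (N : ℕ) :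
    ‖∑ k ∈ Finset.range N, ((r ^ k : ℝ) : ℂ) • v k‖ ^ 2 ≤ C / (1 - r) := by
  have hC0 : 0 ≤ C := (sq_nonneg _).trans (hC 0)
  have h : ‖∑ k ∈ Finset.range N, ((r ^ k : ℝ) : ℂ) • v k‖ ^ 2 =
      ∑ k ∈ Finset.range N, ‖((r ^ k : ℝ) : ℂ) • v k‖ ^ 2 := by
    induction N with
    | zero => simp
    | succ n ih =>
      rw [Finset.sum_range_succ, Finset.sum_range_succ, ← ih, sq, sq, sq]
      refine norm_add_sq_eq_norm_sq_add_norm_sq_of_inner_eq_zero (𝕜 := ℂ) _ _ ?_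
      rw [sum_inner]
      refine Finset.sum_eq_zero fun k hk => ?_
      rw [inner_smul_left, inner_smul_right, hv k n (Finset.mem_range.mp hk).ne]
      simp
  rw [h]
  calc _ ≤ ∑ k ∈ Finset.range N, r ^ k * C := by
        refine Finset.sum_le_sum fun k _ => ?_
        rw [norm_smul, mul_pow, Complex.norm_real, Real.norm_eq_abs, sq_abs]
        refine mul_le_mul ?_ (hC k) (sq_nonneg _) (by positivity)
        have : r ^ k ≤ 1 := pow_le_one₀ hr0 hr1.le
        nlinarith [pow_nonneg hr0 k]
    _ = (∑ k ∈ Finset.range N, r ^ k) * C := by rw [Finset.sum_mul]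
    _ ≤ (1 - r)⁻¹ * C := by
        refine mul_le_mul_of_nonneg_right ?_ hC0
        rw [← tsum_geometric_of_lt_one hr0 hr1]
        exact (summable_geometric_of_lt_one hr0 hr1).sum_le_tsum _ fun _ _ => by positivity
    _ = C / (1 - r) := by ring

end subsetVec

/-- The triangle `k + l < N` is the square `k, l < N` minus the corner `k + l ≥ N`. -/
theorem sum_antidiagonal_eq (N : ℕ) (f : ℕ × ℕ → ℂ) :
    ∑ n ∈ Finset.range N, ∑ p ∈ Finset.HasAntidiagonal.antidiagonal n, f p =
      ∑ p ∈ Finset.range N ×ˢ Finset.range N, f p -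
      ∑ p ∈ (Finset.range N ×ˢ Finset.range N).filter (fun p => N ≤ p.1 + p.2), f p := by
  rw [eq_sub_iff_add_eq, ← Finset.sum_filter_add_sum_filter_not
    (Finset.range N ×ˢ Finset.range N) (fun p => N ≤ p.1 + p.2), add_comm]
  congr 1
  rw [Finset.sum_sigma']
  refine Finset.sum_bij' (fun p _ => p.2) (fun p _ => ⟨p.1 + p.2, p⟩) ?_ ?_ ?_ ?_ ?_
  · rintro ⟨n, k, l⟩ h
    simp at h ⊢
    omega
  · rintro ⟨k, l⟩ h
    simp at h ⊢
    omega
  · rintro ⟨n, k, l⟩ h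
    simp at h ⊢
    omega
  · simp
  · simp

/-- The truncated geometric sum of the kernels `∑_{k + l = n} 1[P t k ∩ Q s l ≠ ∅]` has Schur norm
bounded independently of `r` and `N`. The sum over the whole square `k, l < N` factors through
two orthogonal sums; the corner `k + l ≥ N`, which has to be subtracted, is negligible by `hN`. -/
theorem schurBound_hankel {Γ : Type*} (P Q : Γ → ℕ → Finset ℕ) (R : ℕ)
    (hP : ∀ x k, (P x k).card ≤ R) (hQ : ∀ y l, (Q y l).card ≤ R)
    (hPd : ∀ x k k', k ≠ k' → Disjoint (P x k) (P x k'))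
    (hQd : ∀ y l l', l ≠ l' → Disjoint (Q y l) (Q y l'))
    {r : ℝ} (hr0 : 0 ≤ r) (hr1 : r < 1) (N : ℕ) (hN : (N : ℝ) ^ 2 * r ^ N ≤ 1) :
    SchurBound (fun s t => ((1 - r : ℝ) : ℂ) * ∑ n ∈ Finset.range N, ((r ^ n : ℝ) : ℂ) *
      ∑ p ∈ Finset.HasAntidiagonal.antidiagonal n,
        (if (P t p.1 ∩ Q s p.2).Nonempty then (1 : ℂ) else 0)) (2 * 2 ^ R) := by
  let E := lp (fun _ : Finset ℕ => ℂ) 2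
  let b : HilbertBasis (Finset ℕ) ℂ E := HilbertBasis.ofRepr (LinearIsometryEquiv.refl ℂ E)
  have hb : Orthonormal ℂ b := b.orthonormal
  let sg : Finset ℕ → ℂ := fun ω => (-1) ^ (ω.card + 1)
  have hsg : ∀ ω, ‖sg ω‖ = 1 := by simp [sg]
  let u : Γ → ℕ → E := fun x k => subsetVec b (fun _ => 1) (P x k)
  let v : Γ → ℕ → E := fun y l => subsetVec b sg (Q y l)
  have huv : ∀ x y k l, ⟪u x k, v y l⟫_ℂ = if (P x k ∩ Q y l).Nonempty then 1 else 0 :=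
    fun x y k l => inner_subsetVec_sign hb _ _
  have hu : ∀ x k, ‖u x k‖ ^ 2 ≤ 2 ^ R := fun x k =>
    norm_sq_subsetVec_le hb _ (by simp) (hP x k)
  have hv : ∀ y l, ‖v y l‖ ^ 2 ≤ 2 ^ R := fun y l => norm_sq_subsetVec_le hb _ hsg (hQ y l)
  have hr1' : 0 < 1 - r := by linarith
  have hmain : SchurBound (fun s t => ⟪∑ k ∈ Finset.range N, ((r ^ k : ℝ) : ℂ) • u t k,
      ∑ l ∈ Finset.range N, ((r ^ l : ℝ) : ℂ) • v s l⟫_ℂ) (2 ^ R / (1 - r)) :=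
    ⟨E, inferInstance, inferInstance, inferInstance, _, _,
      fun t => norm_sq_geom_sum_le
        (fun k k' h => inner_subsetVec_disjoint hb _ _ (hPd t k k' h)) (hu t) hr0 hr1 N,
      fun s => norm_sq_geom_sum_le
        (fun k k' h => inner_subsetVec_disjoint hb _ _ (hQd s k k' h)) (hv s) hr0 hr1 N,
      fun _ _ => rfl⟩
  have htail : SchurBound (fun s t =>
      ∑ p ∈ (Finset.range N ×ˢ Finset.range N).filter (fun p => N ≤ p.1 + p.2),
        ((r ^ (p.1 + p.2) : ℝ) : ℂ) * ⟪u t p.1, v s p.2⟫_ℂ)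
      (∑ p ∈ (Finset.range N ×ˢ Finset.range N).filter (fun p => N ≤ p.1 + p.2),
        r ^ (p.1 + p.2) * 2 ^ R) :=
    SchurBound.sum _ fun p _ => SchurBound.smul
      ⟨E, inferInstance, inferInstance, inferInstance, fun t => u t p.1, fun s => v s p.2,
        fun t => hu t _, fun s => hv s _, fun _ _ => rfl⟩ (by positivity)
  have htail_le : ∑ p ∈ (Finset.range N ×ˢ Finset.range N).filter (fun p => N ≤ p.1 + p.2),
      r ^ (p.1 + p.2) * (2 : ℝ) ^ R ≤ 2 ^ R := by
    calc _ ≤ ∑ p ∈ (Finset.range N ×ˢ Finset.range N).filter (fun p => N ≤ p.1 + p.2),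
          r ^ N * (2 : ℝ) ^ R := by
          refine Finset.sum_le_sum fun p hp => ?_
          exact mul_le_mul_of_nonneg_right
            (pow_le_pow_of_le_one hr0 hr1.le (Finset.mem_filter.mp hp).2) (by positivity)
      _ ≤ ((N : ℝ) ^ 2) * (r ^ N * (2 : ℝ) ^ R) := by
          rw [Finset.sum_const, nsmul_eq_mul]
          refine mul_le_mul_of_nonneg_right ?_ (by positivity)
          have := Finset.card_filter_le (Finset.range N ×ˢ Finset.range N)
            (fun p => N ≤ p.1 + p.2)
          rw [Finset.card_product, Finset.card_range, ← sq] at this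
          exact_mod_cast this
      _ = ((N : ℝ) ^ 2 * r ^ N) * 2 ^ R := by ring
      _ ≤ 1 * 2 ^ R := mul_le_mul_of_nonneg_right hN (by positivity)
      _ = 2 ^ R := one_mul _
  have htot := (hmain.add htail.neg).smul hr1'.le
  have hbound : (1 - r) * (2 ^ R / (1 - r) +
      ∑ p ∈ (Finset.range N ×ˢ Finset.range N).filter (fun p => N ≤ p.1 + p.2),
        r ^ (p.1 + p.2) * (2 : ℝ) ^ R) ≤ 2 * 2 ^ R := by
    rw [mul_add, mul_div_cancel₀ _ hr1'.ne']
    have h2 : (0 : ℝ) < 2 ^ R := by positivity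
    nlinarith
  convert htot.mono hbound using 4 with s t
  have hfold : ∀ n ∈ Finset.range N, ((r ^ n : ℝ) : ℂ) *
      ∑ p ∈ Finset.HasAntidiagonal.antidiagonal n,
        (if (P t p.1 ∩ Q s p.2).Nonempty then (1 : ℂ) else 0) =
      ∑ p ∈ Finset.HasAntidiagonal.antidiagonal n,
        ((r ^ (p.1 + p.2) : ℝ) : ℂ) * ⟪u t p.1, v s p.2⟫_ℂ := by
    intro n _
    rw [Finset.mul_sum]
    refine Finset.sum_congr rfl fun p hp => ?_
    rw [huv, Finset.HasAntidiagonal.mem_antidiagonal.mp hp]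
  rw [Finset.sum_congr rfl hfold, sum_antidiagonal_eq, sub_eq_add_neg]
  congr 1
  rw [sum_inner, Finset.sum_product]
  refine Finset.sum_congr rfl fun k _ => ?_
  rw [inner_sum]
  refine Finset.sum_congr rfl fun l _ => ?_
  rw [inner_smul_left, inner_smul_right, Complex.conj_ofReal, pow_add]
  push_cast
  ring

/-! ### The Cayley graph -/

theorem exists_geodesic_point {V : Type*} {G : SimpleGraph V} (hG : G.Connected) (x y : V) (a : ℕ)
    (ha : a ≤ G.dist x y) : ∃ z, G.dist x z = a ∧ G.dist z y = G.dist x y - a := by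
  obtain ⟨p, hp⟩ := hG.exists_walk_length_eq_dist x y
  have h1 := SimpleGraph.dist_le (p.take a)
  have h2 := SimpleGraph.dist_le (p.drop a)
  have h3 := hG.dist_triangle (u := x) (v := p.getVert a) (w := y)
  rw [SimpleGraph.Walk.take_length] at h1
  rw [SimpleGraph.Walk.drop_length] at h2
  exact ⟨p.getVert a, by omega, by omega⟩

/-- Balls in a connected graph of bounded degree have uniformly bounded cardinality. -/
theorem exists_ball {V : Type*} {G : SimpleGraph V} (hG : G.Connected) (n : ℕ)
    (nb : V → Finset V) (hnb : ∀ x, (nb x).card ≤ n) (hadj : ∀ x y, G.Adj x y → y ∈ nb x) (R : ℕ) :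
    ∃ B : ℕ, ∀ x, ∃ s : Finset V, s.card ≤ B ∧ ∀ w, G.dist x w ≤ R → w ∈ s := by
  classical
  induction R with
  | zero =>
    refine ⟨1, fun x => ⟨{x}, by simp, fun w hw => ?_⟩⟩
    have := hG.dist_eq_zero_iff.mp (Nat.le_zero.mp hw)
    simp [this]
  | succ R ih =>
    obtain ⟨B, hB⟩ := ih
    refine ⟨B + B * n, fun x => ?_⟩
    obtain ⟨s, hs, hs'⟩ := hB x
    refine ⟨s ∪ s.biUnion nb, (Finset.card_union_le _ _).trans (add_le_add hs
      ((Finset.card_biUnion_le_card_mul s nb n fun v _ => hnb v).trans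
        (Nat.mul_le_mul_right _ hs))), fun w hw => ?_⟩
    rcases Nat.lt_or_ge R (G.dist x w) with h | h
    · obtain ⟨z, hz1, hz2⟩ := exists_geodesic_point hG x w R h.le
      have hz3 : G.dist z w = 1 := by omega
      exact Finset.mem_union_right _ (Finset.mem_biUnion.mpr
        ⟨z, hs' z hz1.le, hadj z w (SimpleGraph.dist_eq_one_iff_adj.mp hz3)⟩)
    · exact Finset.mem_union_left _ (hs' w h)

theorem dist_le_of_hom {V : Type*} {G : SimpleGraph V} (hG : G.Connected) (f : G →g G) (x y : V) :
    G.dist (f x) (f y) ≤ G.dist x y := by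
  obtain ⟨p, hp⟩ := hG.exists_walk_length_eq_dist x y
  rw [← hp, ← SimpleGraph.Walk.length_map f]
  exact SimpleGraph.dist_le _

section Cayley

variable {Γ : Type*} [Group Γ] (S : Finset Γ)

/-- The Cayley graph, written exactly as in `hyperbolic_weaklyAmenable`. -/
abbrev cayleyGraph : SimpleGraph Γ := SimpleGraph.fromRel (fun x y => x⁻¹ * y ∈ S)

theorem cayleyGraph_adj (hone : (1 : Γ) ∉ S) (hsymm : ∀ s ∈ S, s⁻¹ ∈ S) (x y : Γ) :
    (cayleyGraph S).Adj x y ↔ x⁻¹ * y ∈ S := by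
  rw [SimpleGraph.fromRel_adj]
  constructor
  · rintro ⟨_, h | h⟩
    · exact h
    · simpa using hsymm _ h
  · rintro h
    refine ⟨?_, Or.inl h⟩
    rintro rfl
    simp at h
    exact hone h

theorem cayleyGraph_connected (hone : (1 : Γ) ∉ S) (hsymm : ∀ s ∈ S, s⁻¹ ∈ S)
    (hgen : Subgroup.closure (S : Set Γ) = ⊤) : (cayleyGraph S).Connected := by
  have key : ∀ g : Γ, ∀ x, (cayleyGraph S).Reachable x (x * g) := by
    intro g
    have hg : g ∈ Subgroup.closure (S : Set Γ) := by rw [hgen]; trivial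
    induction hg using Subgroup.closure_induction with
    | mem s hs =>
      intro x
      apply SimpleGraph.Adj.reachable
      rw [cayleyGraph_adj S hone hsymm]
      simpa using hs
    | one => intro x; rw [mul_one]
    | mul g h _ _ ihg ihh => intro x; rw [← mul_assoc]; exact (ihg x).trans (ihh _)
    | inv g _ ih => intro x; simpa using (ih (x * g⁻¹)).symm
  refine ⟨fun x y => ?_⟩
  simpa using key (x⁻¹ * y) x

/-- Left invariance of the word metric. -/
theorem cayleyGraph_dist (hone : (1 : Γ) ∉ S) (hsymm : ∀ s ∈ S, s⁻¹ ∈ S)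
    (hgen : Subgroup.closure (S : Set Γ) = ⊤) (s t : Γ) :
    (cayleyGraph S).dist 1 (s⁻¹ * t) = (cayleyGraph S).dist s t := by
  have hG := cayleyGraph_connected S hone hsymm hgen
  have key : ∀ g x y, (cayleyGraph S).dist (g * x) (g * y) ≤ (cayleyGraph S).dist x y := by
    intro g x y
    refine dist_le_of_hom hG ⟨fun x => g * x, fun {a b} h => ?_⟩ x y
    rw [cayleyGraph_adj S hone hsymm] at h ⊢
    simpa [mul_assoc] using h
  apply le_antisymm
  · simpa using key s⁻¹ s t
  · simpa using key s 1 (s⁻¹ * t)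

end Cayley

/-! ### Parameters and weak amenability -/

/-- The parameters of `φ`: first `r` close to `1`, then `N` large depending on `r`. -/
theorem exists_radius (L : ℕ) {ε : ℝ} (hε : 0 < ε) :
    ∃ (r : ℝ) (N : ℕ), 0 ≤ r ∧ r < 1 ∧ L < N ∧ (N : ℝ) ^ 2 * r ^ N ≤ 1 ∧
      ∀ a ≤ L, |(r ^ a - r ^ N) - 1| ≤ ε := by
  have h1 : Filter.Tendsto (fun r : ℝ => r ^ L) (nhdsWithin 1 (Set.Iio 1)) (nhds 1) := by
    have : ContinuousAt (fun r : ℝ => r ^ L) 1 := by fun_prop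
    simpa using this.tendsto.mono_left nhdsWithin_le_nhds
  have h2 : ∀ᶠ r : ℝ in nhdsWithin 1 (Set.Iio 1), 1 - ε / 2 < r ^ L :=
    h1.eventually (lt_mem_nhds (by linarith))
  have h3 : ∀ᶠ r : ℝ in nhdsWithin 1 (Set.Iio 1), 0 < r ∧ r < 1 := by
    filter_upwards [Ioo_mem_nhdsLT (show (0 : ℝ) < 1 by norm_num)] with r hr using hr
  obtain ⟨r, hrL, hr0, hr1⟩ := (h2.and h3).exists
  have habs : |r| < 1 := by rw [abs_of_pos hr0]; exact hr1
  have h4 := (tendsto_pow_const_mul_const_pow_of_abs_lt_one 2 habs).eventually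
    (ge_mem_nhds (show (0 : ℝ) < 1 by norm_num))
  have h5 := (tendsto_pow_atTop_nhds_zero_of_lt_one hr0.le hr1).eventually
    (ge_mem_nhds (show (0 : ℝ) < ε / 2 by linarith))
  obtain ⟨N, ⟨hN1, hN2⟩, hN3⟩ := ((h4.and h5).and (Filter.eventually_gt_atTop L)).exists
  refine ⟨r, N, hr0.le, hr1, hN3, hN1, fun a ha => ?_⟩
  have h6 : r ^ L ≤ r ^ a := pow_le_pow_of_le_one hr0.le hr1.le ha
  have h7 : r ^ a ≤ 1 := pow_le_one₀ hr0.le hr1.le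
  have h8 : 0 ≤ r ^ N := by positivity
  rw [abs_le]
  constructor <;> linarith

/-- The sum telescopes, so that `φ` is `r ^ |g| - r ^ N` on the ball of radius `N`. -/
theorem geom_sum_ite (r : ℝ) (N a : ℕ) :
    (1 - r) * ∑ n ∈ Finset.range N, r ^ n * (if a ≤ n then 1 else 0) =
      if a < N then r ^ a - r ^ N else 0 := by
  induction N with
  | zero => simp
  | succ N ih =>
    rw [Finset.sum_range_succ, mul_add, ih]
    rcases lt_trichotomy a N with h | h | h
    · rw [if_pos h, if_pos h.le, if_pos (by omega)]; ring
    · subst h; simp; ring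
    · rw [if_neg (by omega), if_neg (by omega), if_neg (by omega)]; ring

/-- **Ozawa.** Hyperbolic groups are weakly amenable: if `Γ` is generated by a finite
symmetric set `S` (with `1 ∉ S`) and the word metric `d` (the edge-path distance in the
Cayley graph of `(Γ, S)`) satisfies the Gromov hyperbolicity inequality
`⟨x, y⟩_w ≥ min (⟨x, z⟩_w) (⟨z, y⟩_w) − δ` for some `δ ≥ 0`, then there is `C ≥ 1` such
that `Γ` is weakly amenable with constant at most `C`. -/
theorem hyperbolic_weaklyAmenable {Γ : Type*} [Group Γ] (S : Finset Γ)
    (hone : (1 : Γ) ∉ S) (hsymm : ∀ s ∈ S, s⁻¹ ∈ S)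
    (hgen : Subgroup.closure (S : Set Γ) = ⊤) :
    -- the Cayley graph of `(Γ, S)` and its edge-path distance
    letI cayley : SimpleGraph Γ := SimpleGraph.fromRel (fun x y => x⁻¹ * y ∈ S)
    letI d : Γ → Γ → ℝ := fun x y => (cayley.dist x y : ℝ)
    -- the Gromov product
    letI gp : Γ → Γ → Γ → ℝ := fun w x y => (d x w + d y w - d x y) / 2
    (∃ δ : ℝ, 0 ≤ δ ∧ ∀ w x y z : Γ, min (gp w x z) (gp w z y) - δ ≤ gp w x y) →
    ∃ C : ℝ, 1 ≤ C ∧ WeaklyAmenableWithConst Γ C := by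
  classical
  rintro ⟨δ, hδ, hyp⟩
  have hG := cayleyGraph_connected S hone hsymm hgen
  have hinv := cayleyGraph_dist S hone hsymm hgen
  have hball := exists_ball hG S.card (fun x => S.image (x * ·))
    (fun x => Finset.card_image_le) (fun x y h => by
      rw [cayleyGraph_adj S hone hsymm] at h
      exact Finset.mem_image.mpr ⟨x⁻¹ * y, h, by simp⟩)
  have hfin : ∀ n : ℕ, {g : Γ | (cayleyGraph S).dist 1 g ≤ n}.Finite := by
    intro n
    obtain ⟨B, hB⟩ := hball n
    obtain ⟨s, _, hs⟩ := hB 1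
    exact s.finite_toSet.subset fun g hg => hs g hg
  have hcount : Countable Γ := by
    rw [← Set.countable_univ_iff]
    refine (Set.countable_iUnion fun n => (hfin n).countable).mono fun g _ => ?_
    exact Set.mem_iUnion.mpr ⟨(cayleyGraph S).dist 1 g, le_refl ((cayleyGraph S).dist 1 g)⟩
  obtain ⟨D, hD⟩ := exists_nat_ge δ
  have hypZ : ∀ w x y z, min (((cayleyGraph S).dist x w : ℤ) + (cayleyGraph S).dist z w -
      (cayleyGraph S).dist x z) ((cayleyGraph S).dist z w + (cayleyGraph S).dist y w -
      (cayleyGraph S).dist z y) - 2 * D ≤ (cayleyGraph S).dist x w + (cayleyGraph S).dist y w -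
      (cayleyGraph S).dist x y := by
    intro w x y z
    have h := hyp w x y z
    rw [sub_le_iff_le_add, min_le_iff] at h ⊢
    refine h.imp (fun h => ?_) (fun h => ?_)
    all_goals
      rify
      linarith
  obtain ⟨R, P, Q, hP, hQ, hPd, hQd, hPQ⟩ := exists_sets (fun x y => (cayleyGraph S).dist x y)
    (1 : Γ) (fun _ _ => SimpleGraph.dist_comm) (fun _ => SimpleGraph.dist_self)
    (fun _ _ _ => hG.dist_triangle) (fun x y a ha => exists_geodesic_point hG x y a ha) hball D hypZ
  refine ⟨2 * (2 * 2 ^ R), ?_, ?_⟩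
  · have : (1 : ℝ) ≤ 2 ^ R := one_le_pow₀ (by norm_num)
    linarith
  intro F ε hε
  obtain ⟨r, N, hr0, hr1, hLN, hN, hφ⟩ :=
    exists_radius (F.sup fun g => (cayleyGraph S).dist 1 g) hε
  let φ : Γ → ℂ := fun g => ((1 - r : ℝ) : ℂ) * ∑ n ∈ Finset.range N, ((r ^ n : ℝ) : ℂ) *
    (if (cayleyGraph S).dist 1 g ≤ n then 1 else 0)
  have hφ_eq : ∀ g, φ g = ((if (cayleyGraph S).dist 1 g < N
      then r ^ (cayleyGraph S).dist 1 g - r ^ N else 0 : ℝ) : ℂ) := by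
    intro g
    rw [← geom_sum_ite]
    simp only [φ]
    simp only [Complex.ofReal_mul, Complex.ofReal_sum, apply_ite Complex.ofReal,
      Complex.ofReal_one, Complex.ofReal_zero]
  have hK : SchurBound (fun s t => φ (s⁻¹ * t)) (2 * (2 * 2 ^ R)) := by
    have h := SchurBound.sum (Finset.range 2) fun σ _ =>
      schurBound_hankel P (Q σ) R hP (hQ σ) hPd (hQd σ) hr0 hr1 N hN
    rw [Finset.sum_const, Finset.card_range, nsmul_eq_mul, Nat.cast_ofNat] at h
    convert h using 3 with s t
    rw [← Finset.mul_sum, Finset.sum_comm]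
    simp only [φ, ← Finset.mul_sum, hPQ, hinv, SimpleGraph.dist_comm (u := s) (v := t)]
  obtain ⟨H, i1, i2, i3, ξ, η, h1, h2, h3⟩ := hK
  refine ⟨φ, ?_, ?_, H, i1, i2, i3, ξ, η, √(2 * (2 * 2 ^ R)), √(2 * (2 * 2 ^ R)),
    Real.sqrt_nonneg _, Real.sqrt_nonneg _, fun t => Real.le_sqrt_of_sq_le (h1 t),
    fun s => Real.le_sqrt_of_sq_le (h2 s), (Real.mul_self_sqrt (by positivity)).le, h3⟩
  · refine (hfin N).subset fun g hg => ?_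
    rw [Function.mem_support, hφ_eq] at hg
    by_contra hlt
    rw [Set.mem_ofPred_eq, not_le] at hlt
    exact hg (by rw [if_neg (by omega), Complex.ofReal_zero])
  · intro g hg
    have hgL : (cayleyGraph S).dist 1 g ≤ F.sup fun g => (cayleyGraph S).dist 1 g :=
      Finset.le_sup (f := fun g => (cayleyGraph S).dist 1 g) hg
    rw [hφ_eq, if_pos (hgL.trans_lt hLN), ← Complex.ofReal_one, ← Complex.ofReal_sub,
      Complex.norm_real, Real.norm_eq_abs]
    exact hφ _ hgL
end
end
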